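/- arXiv:1107.2878 — 10 statements merged into one kernel-verified Lean document; each statement's English description precedes it below -/
import Mathlib

section
/- Let λ : ℕ → ℝ be a sequence of pairwise distinct positive rates and let p_k(t) = (∏_{j=1}^{k−1} λ_j) ∑_{m=1}^{k} e^{−λ_m t}/∏_{l=1, l≠m}^{k} (λ_l − λ_m) for k > 1 and p_1(t) = e^{−λ_1 t}. Fix t > 0 and assume that the sequence (k·p_k(t))_{k≥1} is summable and that the sequence (1 − ∑_{m=1}^{k} ∏_{l=1, l≠m}^{k} (λ_l/(λ_l − λ_m)) e^{−λ_m t})_{k≥1} is summable. Then ∑_{k=1}^{∞} k·p_k(t) = 1 + ∑_{k=1}^{∞} ( 1 − ∑_{m=1}^{k} ∏_{l=1, l≠m}^{k} (λ_l/(λ_l − λ_m)) e^{−λ_m t} ), where for k = 1 the empty product ∏_{l=1, l≠1}^{1} is taken equal to 1. -/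
/-!
Write `F k = ∑_{m ≤ k} ∏_{l ≠ m} λ_l / (λ_l - λ_m) e^{-λ_m t}`, which is `P(N(t) ≤ k)` since the
waiting time until the `k`-th birth is hypoexponential. Partial fractions give
`F (k + 1) - F k = p (k + 1)` and `F 1 = p 1`, so Abel summation yields
`∑_{k ≤ n} k p_k = 1 + ∑_{k < n} (1 - F k) - n (1 - F n)`.
Both sums converge, hence `n (1 - F n)` has a limit; as `1 - F n` is summable and the
harmonic series diverges, this limit is `0`.
-/

/-- The distribution function `k ↦ P(N(t) ≤ k)` of the birth process, in partial fraction form. -/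
noncomputable def birthCdf (lam : ℕ → ℝ) (t : ℝ) (k : ℕ) : ℝ :=
  ∑ m ∈ Finset.Icc 1 k,
    (∏ l ∈ (Finset.Icc 1 k).erase m, lam l / (lam l - lam m)) * Real.exp (-(lam m) * t)

/-- Passing from `k` to `k + 1` adds the probability of the state `k + 1`. For `m ≤ k` the
coefficients match because `λ_{k+1} / (λ_{k+1} - λ_m) - 1 = λ_m / (λ_{k+1} - λ_m)`. -/
lemma birthCdf_succ (lam : ℕ → ℝ)
    (hdist : ∀ i j, 1 ≤ i → 1 ≤ j → i ≠ j → lam i ≠ lam j) (t : ℝ) (k : ℕ) :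
    birthCdf lam t (k + 1) = birthCdf lam t k + (∏ j ∈ Finset.Icc 1 k, lam j) *
      ∑ m ∈ Finset.Icc 1 (k + 1), Real.exp (-(lam m) * t) /
        ∏ l ∈ (Finset.Icc 1 (k + 1)).erase m, (lam l - lam m) := by
  have hins : Finset.Icc 1 (k + 1) = insert (k + 1) (Finset.Icc 1 k) := by
    ext x; simp only [Finset.mem_Icc, Finset.mem_insert]; omega
  have hnot : k + 1 ∉ Finset.Icc 1 k := by simp
  unfold birthCdf
  rw [hins, Finset.sum_insert hnot, Finset.sum_insert hnot, Finset.erase_insert hnot, mul_add,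
    Finset.prod_div_distrib, Finset.mul_sum, add_left_comm, ← Finset.sum_add_distrib]
  congr 1
  · ring
  · refine Finset.sum_congr rfl fun m hm => ?_
    have hm' := Finset.mem_Icc.1 hm
    have hne : k + 1 ≠ m := by omega
    have hnot' : k + 1 ∉ (Finset.Icc 1 k).erase m := by simp
    rw [Finset.erase_insert_of_ne hne, Finset.prod_insert hnot', Finset.prod_insert hnot',
      ← Finset.mul_prod_erase _ lam hm, Finset.prod_div_distrib]
    have h1 : lam (k + 1) - lam m ≠ 0 :=
      sub_ne_zero.2 (hdist _ _ (by omega) hm'.1 hne)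
    have h2 : ∏ l ∈ (Finset.Icc 1 k).erase m, (lam l - lam m) ≠ 0 := by
      refine Finset.prod_ne_zero_iff.2 fun l hl => ?_
      have hl' := Finset.mem_erase.1 hl
      exact sub_ne_zero.2 (hdist _ _ (Finset.mem_Icc.1 hl'.2).1 hm'.1 hl'.1)
    field_simp
    ring

/-- If `a` is summable and `(n + 1) a n` converges, the limit is `0`: otherwise
`1 / (n + 1) = O(a n)` and the harmonic series would converge. -/
lemma limit_eq_zero_of_summable {a : ℕ → ℝ} (ha : Summable a) {L : ℝ}
    (hL : Filter.Tendsto (fun n : ℕ => ((n : ℝ) + 1) * a n) Filter.atTop (nhds L)) : L = 0 := by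
  by_contra h0
  have hO := ((hL.inv₀ h0).isBigO_one ℝ).mul (Asymptotics.isBigO_refl a Filter.atTop)
  have hne := hL.eventually_ne h0
  have hO' : (fun n : ℕ => 1 / ((n : ℝ) + 1)) =O[Filter.atTop] a := by
    refine (hO.congr' ?_ ?_)
    · filter_upwards [hne] with n hn
      have h1 := left_ne_zero_of_mul hn
      have h2 := right_ne_zero_of_mul hn
      field_simp
    · exact Filter.Eventually.of_forall fun n => one_mul _
  have hs := summable_of_isBigO_nat ha hO'
  refine Real.not_summable_one_div_natCast ((summable_nat_add_iff 1).1 ?_)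
  simpa using hs

/-- Abel summation for the increments of a sequence started at `0`. -/
lemma sum_mul_increment {q F : ℕ → ℝ} (h1 : F 1 = q 1)
    (hq : ∀ k, 1 ≤ k → F (k + 1) = F k + q (k + 1)) (n : ℕ) :
    ∑ k ∈ Finset.range (n + 1), ((k + 1 : ℕ) : ℝ) * q (k + 1)
      = 1 + ∑ k ∈ Finset.range n, (1 - F (k + 1)) - ((n : ℝ) + 1) * (1 - F (n + 1)) := by
  induction n with
  | zero => simp [h1]
  | succ n ih =>
    rw [Finset.sum_range_succ, ih, Finset.sum_range_succ _ n, hq (n + 1) (by omega)]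
    push_cast
    ring

/-- Mean value of the classical nonlinear pure birth process:
`E N(t) = ∑_{k≥1} k p_k(t) = 1 + ∑_{k≥1} (1 − ∑_{m=1}^k ∏_{l≠m} λ_l/(λ_l−λ_m) e^{−λ_m t})`. -/
theorem mean_nonlinear_birth_process (lam : ℕ → ℝ)
    (hpos : ∀ i, 1 ≤ i → 0 < lam i)
    (hdist : ∀ i j, 1 ≤ i → 1 ≤ j → i ≠ j → lam i ≠ lam j)
    (p : ℕ → ℝ → ℝ)
    (hp1 : ∀ t : ℝ, p 1 t = Real.exp (-(lam 1) * t))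
    (hpk : ∀ k, 1 < k → ∀ t : ℝ, p k t =
      (∏ j ∈ Finset.Icc 1 (k - 1), lam j) *
        ∑ m ∈ Finset.Icc 1 k,
          Real.exp (-(lam m) * t) / ∏ l ∈ (Finset.Icc 1 k).erase m, (lam l - lam m))
    (t : ℝ) (ht : 0 < t)
    (hsum1 : Summable (fun k : ℕ => ((k + 1 : ℕ) : ℝ) * p (k + 1) t))
    (hsum2 : Summable (fun k : ℕ =>
      1 - ∑ m ∈ Finset.Icc 1 (k + 1),
        (∏ l ∈ (Finset.Icc 1 (k + 1)).erase m, lam l / (lam l - lam m)) *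
          Real.exp (-(lam m) * t))) :
    ∑' k : ℕ, ((k + 1 : ℕ) : ℝ) * p (k + 1) t
      = 1 + ∑' k : ℕ, (1 - ∑ m ∈ Finset.Icc 1 (k + 1),
          (∏ l ∈ (Finset.Icc 1 (k + 1)).erase m, lam l / (lam l - lam m)) *
            Real.exp (-(lam m) * t)) := by
  change _ = 1 + ∑' k : ℕ, (1 - birthCdf lam t (k + 1))
  change Summable (fun k : ℕ => 1 - birthCdf lam t (k + 1)) at hsum2
  have hF1 : birthCdf lam t 1 = p 1 t := by simp [birthCdf, hp1]
  have hF : ∀ k, 1 ≤ k → birthCdf lam t (k + 1) = birthCdf lam t k + p (k + 1) t := by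
    intro k hk
    rw [birthCdf_succ lam hdist, hpk (k + 1) (by omega), Nat.add_sub_cancel]
  have habel := sum_mul_increment (q := fun k => p k t) hF1 hF
  have hS := (Filter.tendsto_add_atTop_iff_nat 1).2 hsum1.hasSum.tendsto_sum_nat
  have hT := hsum2.hasSum.tendsto_sum_nat.const_add 1
  have hD := hT.sub hS
  have hzero := limit_eq_zero_of_summable hsum2 (hD.congr fun n => by rw [habel n]; ring)
  linarith
end

section
/- Let k ≥ 2, let λ_1, …, λ_k be pairwise distinct positive reals, and let p_k(s) = (∏_{j=1}^{k−1} λ_j) ∑_{m=1}^{k} e^{−λ_m s}/∏_{l=1, l≠m}^{k} (λ_l − λ_m). Then for every t > 0, ∫_0^∞ p_k(s) · t·e^{−t²/(2s)}/√(2π s³) ds = (∏_{j=1}^{k−1} λ_j) ∑_{m=1}^{k} e^{−t√(2λ_m)}/∏_{l=1, l≠m}^{k} (λ_l − λ_m). -/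
/-!
By linearity of the integral the claim reduces to the Laplace transform of the first-passage
density, `∫₀^∞ e^{-a s} q(t,s) ds = e^{-t √(2a)}` (`integral_exp_mul_firstPassage`). This is proved
with an explicit antiderivative. Write `b = √(2a)` and let `Φ` be the standard normal distribution
function. The (rescaled) distribution function of the inverse Gaussian law,
`G(s) = e^{-tb} Φ(b√s - t/√s) + e^{tb} Φ(-b√s - t/√s)`,
has derivative `e^{-a s} q(t,s)` on `(0, ∞)` (`hasDerivAt_firstPassageAntideriv`). It tends to `0`
at `0⁺`, where both arguments of `Φ` tend to `-∞`, and to `e^{-tb}` at `∞`, where the first argument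
tends to `+∞` and the second to `-∞`. Since the derivative is nonnegative, integrability comes for
free.
-/

open Finset MeasureTheory

open Filter Topology ProbabilityTheory

lemma hasDerivAt_cdf_gaussianReal (x : ℝ) :
    HasDerivAt (fun y => cdf (gaussianReal 0 1) y) (gaussianPDFReal 0 1 x) x := by
  have hint := integrable_gaussianPDFReal 0 1
  have hcont : Continuous (gaussianPDFReal 0 1) := by
    rw [gaussianPDFReal_def]; fun_prop
  have h0 : ∀ y, cdf (gaussianReal 0 1) y = ∫ z in Set.Iic y, gaussianPDFReal 0 1 z := by
    intro y
    rw [cdf_eq_real, measureReal_def, gaussianReal_apply_eq_integral 0 one_ne_zero,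
      ENNReal.toReal_ofReal (integral_nonneg fun z => gaussianPDFReal_nonneg 0 1 z)]
  have h : (fun y => cdf (gaussianReal 0 1) y)
      = fun y => cdf (gaussianReal 0 1) 0 + ∫ z in (0 : ℝ)..y, gaussianPDFReal 0 1 z := by
    funext y
    rw [← intervalIntegral.integral_Iic_sub_Iic hint.integrableOn hint.integrableOn, h0, h0]
    ring
  rw [h]
  exact (intervalIntegral.integral_hasDerivAt_right hint.intervalIntegrable
    hcont.stronglyMeasurable.stronglyMeasurableAtFilter hcont.continuousAt).const_add _

/-- The antiderivative in `s` of `e^{-b² s / 2} q(t,s)` on `(0, ∞)`: up to the factor `e^{-tb}`, the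
distribution function of the hitting time of level `t` by Brownian motion with drift `b`. Only its
values at `s > 0` carry meaning. -/
noncomputable def firstPassageAntideriv (b t s : ℝ) : ℝ :=
  Real.exp (-t * b) * cdf (gaussianReal 0 1)
      (b * √s - t / √s) +
    Real.exp (t * b) * cdf (gaussianReal 0 1)
      (-b * √s - t / √s)

lemma hasDerivAt_firstPassageArg (c t : ℝ) {s : ℝ} (hs : 0 < s) :
    HasDerivAt (fun s => c * √s - t / √s) (c / (2 * √s) + t / (2 * (s * √s))) s := by
  have hr : √s ≠ 0 := (Real.sqrt_pos.2 hs).ne'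
  have h := Real.hasDerivAt_sqrt hs.ne'
  convert! (h.const_mul c).sub ((hasDerivAt_const s t).div h hr) using 1
  rw [Real.sq_sqrt hs.le]
  field_simp
  ring

/-- The exponential prefactor cancels the cross term of the square in the exponent, so both
Gaussian densities in the derivative of the antiderivative become the same function of `s`. -/
lemma exp_mul_gaussianPDFReal (c t : ℝ) {s : ℝ} (hs : 0 < s) :
    Real.exp (-t * c) * gaussianPDFReal 0 1 (c * √s - t / √s)
      = (√(2 * Real.pi))⁻¹ * (Real.exp (-(c ^ 2 / 2) * s) * Real.exp (-t ^ 2 / (2 * s))) := by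
  have hr : √s ≠ 0 := (Real.sqrt_pos.2 hs).ne'
  have hsq : √s ^ 2 = s := Real.sq_sqrt hs.le
  have hexp : -t * c + -(c * √s - t / √s) ^ 2 / 2
      = -(c ^ 2 / 2) * s + -t ^ 2 / (2 * s) := by
    have : (c * √s - t / √s) ^ 2 = c ^ 2 * s - 2 * c * t + t ^ 2 / s := by
      rw [sub_sq, mul_pow, div_pow, hsq]
      field_simp
    rw [this]
    field_simp
    ring
  rw [gaussianPDFReal, ← Real.exp_add, ← hexp, Real.exp_add]
  simp only [NNReal.coe_one, mul_one, sub_zero]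
  ring

lemma hasDerivAt_firstPassageAntideriv (b t : ℝ) {s : ℝ} (hs : 0 < s) :
    HasDerivAt (firstPassageAntideriv b t)
      (Real.exp (-(b ^ 2 / 2) * s) *
        (t * Real.exp (-t ^ 2 / (2 * s)) / √(2 * Real.pi * s ^ 3))) s := by
  have h1 := ((hasDerivAt_cdf_gaussianReal _).comp s
    (hasDerivAt_firstPassageArg b t hs)).const_mul (Real.exp (-t * b))
  have h2 := ((hasDerivAt_cdf_gaussianReal _).comp s
    (hasDerivAt_firstPassageArg (-b) t hs)).const_mul (Real.exp (t * b))
  refine (h1.add h2).congr_deriv ?_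
  have e1 := exp_mul_gaussianPDFReal b t hs
  have e2 := exp_mul_gaussianPDFReal (-b) t hs
  rw [neg_mul_neg, neg_sq] at e2
  rw [← mul_assoc, e1, ← mul_assoc (Real.exp (t * b)), e2]
  have hr : √s ≠ 0 := (Real.sqrt_pos.2 hs).ne'
  have hpi : √(2 * Real.pi) ≠ 0 := (Real.sqrt_pos.2 (by positivity)).ne'
  have h3 : √(2 * Real.pi * s ^ 3) = √(2 * Real.pi) * (s * √s) := by
    rw [Real.sqrt_mul (by positivity) (s ^ 3), pow_succ s 2,
      Real.sqrt_mul (sq_nonneg s) s, Real.sqrt_sq hs.le]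
  rw [h3]
  field_simp
  ring

lemma tendsto_firstPassageArg_zero (c : ℝ) {t : ℝ} (ht : 0 < t) :
    Tendsto (fun s => c * √s - t / √s) (𝓝[>] 0) atBot := by
  have h0 : Tendsto (fun s : ℝ => √s) (𝓝[>] 0) (𝓝 0) := by
    have := (Real.continuous_sqrt.tendsto 0).mono_left (nhdsWithin_le_nhds (s := Set.Ioi 0))
    rwa [Real.sqrt_zero] at this
  have h1 : Tendsto (fun s : ℝ => √s) (𝓝[>] 0) (𝓝[>] 0) :=
    tendsto_nhdsWithin_iff.2 ⟨h0, eventually_nhdsWithin_of_forall fun s hs => Real.sqrt_pos.2 hs⟩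
  have h2 : Tendsto (fun s : ℝ => t / √s) (𝓝[>] 0) atTop :=
    (tendsto_inv_nhdsGT_zero.comp h1).const_mul_atTop ht
  simp only [sub_eq_add_neg]
  exact (h0.const_mul c).add_atBot (tendsto_neg_atTop_atBot.comp h2)

lemma tendsto_firstPassageAntideriv_zero (b : ℝ) {t : ℝ} (ht : 0 < t) :
    Tendsto (firstPassageAntideriv b t) (𝓝[>] 0) (𝓝 0) := by
  have h := fun c => (tendsto_cdf_atBot (gaussianReal 0 1)).comp
    (tendsto_firstPassageArg_zero c ht)
  have h' := ((h b).const_mul (Real.exp (-t * b))).add ((h (-b)).const_mul (Real.exp (t * b)))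
  rw [mul_zero, mul_zero, add_zero] at h'
  exact h'

lemma tendsto_firstPassageAntideriv_atTop {b : ℝ} (hb : 0 < b) (t : ℝ) :
    Tendsto (firstPassageAntideriv b t) atTop (𝓝 (Real.exp (-t * b))) := by
  have h0 : Tendsto (fun s : ℝ => -(t / √s)) atTop (𝓝 0) := by
    simpa using (Real.tendsto_sqrt_atTop.const_div_atTop t).neg
  have h1 : Tendsto (fun s : ℝ => b * √s - t / √s) atTop atTop := by
    simp only [sub_eq_add_neg]
    exact (Real.tendsto_sqrt_atTop.const_mul_atTop hb).atTop_add h0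
  have h2 : Tendsto (fun s : ℝ => -b * √s - t / √s) atTop atBot := by
    simp only [sub_eq_add_neg]
    exact (Real.tendsto_sqrt_atTop.const_mul_atTop_of_neg (neg_lt_zero.2 hb)).atBot_add h0
  have h3 := (tendsto_cdf_atTop (gaussianReal 0 1)).comp h1
  have h4 := (tendsto_cdf_atBot (gaussianReal 0 1)).comp h2
  have h5 := (h3.const_mul (Real.exp (-t * b))).add (h4.const_mul (Real.exp (t * b)))
  rw [mul_one, mul_zero, add_zero] at h5
  exact h5

/-- The Laplace transform of the Brownian first-passage density, with integrability. -/
lemma integral_exp_mul_firstPassage {a t : ℝ} (ha : 0 < a) (ht : 0 < t) :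
    IntegrableOn (fun s => Real.exp (-a * s) *
        (t * Real.exp (-t ^ 2 / (2 * s)) / √(2 * Real.pi * s ^ 3))) (Set.Ioi 0) ∧
      ∫ s in Set.Ioi (0 : ℝ), Real.exp (-a * s) *
        (t * Real.exp (-t ^ 2 / (2 * s)) / √(2 * Real.pi * s ^ 3))
      = Real.exp (-t * √(2 * a)) := by
  have hb : 0 < √(2 * a) := Real.sqrt_pos.2 (by positivity)
  have hba : √(2 * a) ^ 2 / 2 = a := by
    rw [Real.sq_sqrt (by positivity)]; ring
  -- At `s = 0` the antiderivative takes a junk value (division by `√0`); it is replaced there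
  -- by the right limit `0`.
  set g := Function.update (firstPassageAntideriv √(2 * a) t) 0 0 with hg
  have hcont : ContinuousWithinAt g (Set.Ici 0) 0 := by
    rw [hg, continuousWithinAt_update_same, Set.Ici_sdiff_left]
    exact tendsto_firstPassageAntideriv_zero _ ht
  have hderiv : ∀ s ∈ Set.Ioi (0 : ℝ), HasDerivAt g (Real.exp (-a * s) *
      (t * Real.exp (-t ^ 2 / (2 * s)) / √(2 * Real.pi * s ^ 3))) s := by
    intro s hs
    have h := hasDerivAt_firstPassageAntideriv √(2 * a) t (Set.mem_Ioi.1 hs)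
    rw [hba] at h
    refine h.congr_of_eventuallyEq ?_
    filter_upwards [Ioi_mem_nhds (Set.mem_Ioi.1 hs)] with x hx
    exact Function.update_of_ne (ne_of_gt hx) _ _
  have hnonneg : ∀ s ∈ Set.Ioi (0 : ℝ), 0 ≤ Real.exp (-a * s) *
      (t * Real.exp (-t ^ 2 / (2 * s)) / √(2 * Real.pi * s ^ 3)) := by
    intro s _
    positivity
  have hlim : Tendsto g atTop (𝓝 (Real.exp (-t * √(2 * a)))) := by
    refine (tendsto_firstPassageAntideriv_atTop hb t).congr' ?_
    filter_upwards [eventually_gt_atTop 0] with x hx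
    exact (Function.update_of_ne (ne_of_gt hx) _ _).symm
  refine ⟨integrableOn_Ioi_deriv_of_nonneg hcont hderiv hnonneg hlim, ?_⟩
  rw [integral_Ioi_of_hasDerivAt_of_nonneg hcont hderiv hnonneg hlim, hg,
    Function.update_self, sub_zero]

/-- Distribution of the nonlinear birth process subordinated to the Brownian
first-passage time `T_t` (Theorem 2.3). -/
theorem birth_process_at_first_passage (k : ℕ) (hk : 2 ≤ k) (lam : ℕ → ℝ)
    (hpos : ∀ i ∈ Finset.Icc 1 k, 0 < lam i)
    (hdist : ∀ i ∈ Finset.Icc 1 k, ∀ j ∈ Finset.Icc 1 k, i ≠ j → lam i ≠ lam j)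
    (t : ℝ) (ht : 0 < t) :
    ∫ s in Set.Ioi (0 : ℝ),
        ((∏ j ∈ Finset.Icc 1 (k - 1), lam j) *
          ∑ m ∈ Finset.Icc 1 k,
            Real.exp (-(lam m) * s) / ∏ l ∈ (Finset.Icc 1 k).erase m, (lam l - lam m)) *
          (t * Real.exp (-t ^ 2 / (2 * s)) / Real.sqrt (2 * Real.pi * s ^ 3))
      = (∏ j ∈ Finset.Icc 1 (k - 1), lam j) *
          ∑ m ∈ Finset.Icc 1 k,
            Real.exp (-t * Real.sqrt (2 * lam m)) /
              ∏ l ∈ (Finset.Icc 1 k).erase m, (lam l - lam m) := by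
  have hL := fun m hm => integral_exp_mul_firstPassage (hpos m hm) ht
  have hrw : ∀ s : ℝ, ((∏ j ∈ Finset.Icc 1 (k - 1), lam j) *
          ∑ m ∈ Finset.Icc 1 k,
            Real.exp (-(lam m) * s) / ∏ l ∈ (Finset.Icc 1 k).erase m, (lam l - lam m)) *
          (t * Real.exp (-t ^ 2 / (2 * s)) / Real.sqrt (2 * Real.pi * s ^ 3))
      = (∏ j ∈ Finset.Icc 1 (k - 1), lam j) * ∑ m ∈ Finset.Icc 1 k,
          Real.exp (-(lam m) * s) *
            (t * Real.exp (-t ^ 2 / (2 * s)) / Real.sqrt (2 * Real.pi * s ^ 3)) /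
            ∏ l ∈ (Finset.Icc 1 k).erase m, (lam l - lam m) := by
    intro s
    rw [mul_assoc, Finset.sum_mul]
    congr 1
    exact Finset.sum_congr rfl fun m _ => div_mul_eq_mul_div _ _ _
  simp_rw [hrw]
  rw [integral_const_mul, integral_finsetSum _ fun m hm => (hL m hm).1.div_const _]
  congr 1
  refine Finset.sum_congr rfl fun m hm => ?_
  rw [integral_div, (hL m hm).2]
end

section
/- Let λ : ℕ → ℝ be pairwise distinct positive rates, set λ_0 = 0, and define f_0(t) = 0, f_1(t) = e^{−t√(2λ_1)}, and for k ≥ 2, f_k(t) = (∏_{j=1}^{k−1} λ_j) ∑_{m=1}^{k} e^{−t√(2λ_m)}/∏_{l=1, l≠m}^{k} (λ_l − λ_m). Then for every k ≥ 1 and every t, the second derivative satisfies f_k''(t) = 2·(λ_k·f_k(t) − λ_{k−1}·f_{k−1}(t)). -/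
/-!
Each mode `exp (-t √(2 λ_m))` is an eigenfunction of `d²/dt²` with eigenvalue `2 λ_m`, so
`f_k''` is the sum for `f_k` with the `m`-th term multiplied by `2 λ_m`
(`iteratedDeriv_two_mode_sum`). In `λ_k f_k - f_k'' / 2` the `m`-th term therefore carries the
factor `λ_k - λ_m`: the term `m = k` disappears, and for `m < k` this factor cancels the factor
`l = k` of the denominator (`mode_sum_recurrence`). What remains is the sum defining `f_{k-1}`,
times the last factor `λ_{k-1}` of the prefactor.
-/


open Finset

theorem iteratedDeriv_two_mode_sum (s : Finset ℕ) (C : ℝ) (a D : ℕ → ℝ)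
    (ha : ∀ m ∈ s, 0 ≤ a m) (t : ℝ) :
    iteratedDeriv 2 (fun t : ℝ => C * ∑ m ∈ s, Real.exp (-t * Real.sqrt (a m)) / D m) t =
      C * ∑ m ∈ s, a m * (Real.exp (-t * Real.sqrt (a m)) / D m) := by
  have hexp : ∀ (m : ℕ) (x : ℝ), HasDerivAt (fun t : ℝ => Real.exp (-t * Real.sqrt (a m)))
      (Real.exp (-x * Real.sqrt (a m)) * (-1 * Real.sqrt (a m))) x := fun m x =>
    ((hasDerivAt_neg x).mul_const _).exp
  have h1 : deriv (fun t : ℝ => C * ∑ m ∈ s, Real.exp (-t * Real.sqrt (a m)) / D m) =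
      fun t => C * ∑ m ∈ s,
        Real.exp (-t * Real.sqrt (a m)) * (-1 * Real.sqrt (a m)) / D m := by
    funext x
    exact (HasDerivAt.const_mul C
      (HasDerivAt.fun_sum fun m _ => (hexp m x).div_const (D m))).deriv
  rw [iteratedDeriv_succ, iteratedDeriv_one, h1]
  rw [(HasDerivAt.const_mul C (HasDerivAt.fun_sum fun m _ =>
    ((hexp m t).mul_const (-1 * Real.sqrt (a m))).div_const (D m))).deriv]
  congr 1
  refine Finset.sum_congr rfl fun m hm => ?_
  have := Real.mul_self_sqrt (ha m hm)
  linear_combination (Real.exp (-t * Real.sqrt (a m)) / D m) * this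

/-- Passing from the denominators of order `n` to those of order `n + 1` adds the factor
`lam (n + 1) - lam m`, which the weight in the left-hand sum cancels. -/
theorem mode_sum_recurrence (lam e : ℕ → ℝ) (n : ℕ)
    (hdist : ∀ i j, 1 ≤ i → 1 ≤ j → i ≠ j → lam i ≠ lam j) :
    ∑ m ∈ Finset.Icc 1 (n + 1), (lam (n + 1) - lam m) *
        (e m / ∏ l ∈ (Finset.Icc 1 (n + 1)).erase m, (lam l - lam m)) =
      ∑ m ∈ Finset.Icc 1 n, e m / ∏ l ∈ (Finset.Icc 1 n).erase m, (lam l - lam m) := by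
  rw [Finset.sum_Icc_succ_top (by omega), sub_self, zero_mul, add_zero]
  refine Finset.sum_congr rfl fun m hm => ?_
  obtain ⟨hm1, hmn⟩ := Finset.mem_Icc.mp hm
  have hins : (Finset.Icc 1 (n + 1)).erase m = insert (n + 1) ((Finset.Icc 1 n).erase m) := by
    ext x
    simp only [Finset.mem_erase, Finset.mem_Icc, Finset.mem_insert]
    omega
  have hne : lam (n + 1) - lam m ≠ 0 :=
    sub_ne_zero.mpr (hdist _ _ (by omega) hm1 (by omega))
  rw [hins, Finset.prod_insert (by simp), ← mul_div_assoc, mul_div_mul_left _ _ hne]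

/-- The state probabilities of `N(T_t)` satisfy the second-order
difference-differential equation `f_k'' = 2(λ_k f_k − λ_{k−1} f_{k−1})` (Theorem 2.5). -/
theorem second_order_equation_birth_at_first_passage (lam : ℕ → ℝ) (hlam0 : lam 0 = 0)
    (hpos : ∀ i, 1 ≤ i → 0 < lam i)
    (hdist : ∀ i j, 1 ≤ i → 1 ≤ j → i ≠ j → lam i ≠ lam j)
    (f : ℕ → ℝ → ℝ)
    (hf0 : ∀ t : ℝ, f 0 t = 0)
    (hf1 : ∀ t : ℝ, f 1 t = Real.exp (-t * Real.sqrt (2 * lam 1)))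
    (hfk : ∀ k, 2 ≤ k → ∀ t : ℝ, f k t =
      (∏ j ∈ Finset.Icc 1 (k - 1), lam j) *
        ∑ m ∈ Finset.Icc 1 k,
          Real.exp (-t * Real.sqrt (2 * lam m)) /
            ∏ l ∈ (Finset.Icc 1 k).erase m, (lam l - lam m))
    (k : ℕ) (hk : 1 ≤ k) (t : ℝ) :
    iteratedDeriv 2 (f k) t = 2 * (lam k * f k t - lam (k - 1) * f (k - 1) t) := by
  -- The formula for `k ≥ 2` also gives `f 1`: both products are then empty.
  have hf : ∀ n : ℕ, f (n + 1) = fun t : ℝ => (∏ j ∈ Finset.Icc 1 n, lam j) *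
      ∑ m ∈ Finset.Icc 1 (n + 1), Real.exp (-t * Real.sqrt (2 * lam m)) /
        ∏ l ∈ (Finset.Icc 1 (n + 1)).erase m, (lam l - lam m) := by
    intro n
    funext x
    rcases n with _ | n
    · simp [hf1]
    · exact hfk (n + 2) (by omega) x
  obtain ⟨n, rfl⟩ : ∃ n, k = n + 1 := ⟨k - 1, by omega⟩
  have hprev : lam n * f n t = (∏ j ∈ Finset.Icc 1 n, lam j) *
      ∑ m ∈ Finset.Icc 1 n, Real.exp (-t * Real.sqrt (2 * lam m)) /
        ∏ l ∈ (Finset.Icc 1 n).erase m, (lam l - lam m) := by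
    rcases n with _ | n
    · simp [hf0]
    · rw [hf n, Finset.prod_Icc_succ_top (by omega)]
      ring
  rw [Nat.add_sub_cancel, hprev, hf n,
    iteratedDeriv_two_mode_sum _ _ (fun m => 2 * lam m)
      (fun m => ∏ l ∈ (Finset.Icc 1 (n + 1)).erase m, (lam l - lam m))
      (fun m hm => mul_nonneg zero_le_two (hpos m (Finset.mem_Icc.mp hm).1).le) t,
    ← mode_sum_recurrence lam (fun m => Real.exp (-t * Real.sqrt (2 * lam m))) n hdist]
  simp only [sub_mul, Finset.sum_sub_distrib, mul_assoc, ← Finset.mul_sum]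
  ring
end

section
/- Fix λ > 0 and define recursively functions g_j : (0,∞) → ℝ by g_0(t) = e^{−λt} and g_{j+1}(t) = ∫_0^∞ g_j(s) · t·e^{−t²/(2s)}/√(2π s³) ds for t > 0. Then for every n ≥ 0 and t > 0, g_n(t) = exp(−t · λ^{1/2^n} · 2^{1 − 1/2^n}). -/
/-!
By induction on `n`, everything reduces to the Laplace transform of the first-passage density: for
`c, t > 0`,
`∫₀^∞ e^{-c² s / 2} · t e^{-t² / (2s)} / √(2π s³) ds = e^{-c t}` (`laplace_first_passage`).
With `μₙ = λ^{1/2ⁿ} 2^{1 - 1/2ⁿ}` one has `μₙ = μₙ₊₁² / 2`, so each integration replaces the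
exponential rate `μₙ` by `μₙ₊₁`.

The Laplace transform is computed from an explicit antiderivative, the one that gives the
distribution function of the inverse Gaussian law. Let `G x = ∫₀ˣ e^{-y²/2} dy`,
`u = c √s - t / √s` and `v = c √s + t / √s`. Since `u² / 2 = c² s / 2 + t² / (2s) - c t` and
`v² = u² + 4 c t`, the function `e^{-ct} (G u - e^{2ct} G v) / √(2π)` has the integrand as its
derivative. As `s → 0⁺`, `u → -∞` and `v → ∞`; as `s → ∞`, both tend to `∞`. Hence the total
increment is `2 e^{-ct} G(∞) / √(2π) = e^{-ct}`. The integrand is nonnegative, so integrability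
is automatic.
-/

open MeasureTheory Filter Topology

/-- The unnormalized error function `x ↦ ∫₀ˣ e^{-y²/2} dy`, as an (oriented) interval integral. -/
noncomputable def gaussPrim (x : ℝ) : ℝ := ∫ y in (0 : ℝ)..x, Real.exp (-(1 / 2) * y ^ 2)

lemma gaussPrim_hasDerivAt (x : ℝ) :
    HasDerivAt gaussPrim (Real.exp (-(1 / 2) * x ^ 2)) x := by
  have hc : Continuous fun y : ℝ => Real.exp (-(1 / 2) * y ^ 2) := by fun_prop
  exact intervalIntegral.integral_hasDerivAt_right (hc.intervalIntegrable _ _)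
    (hc.stronglyMeasurableAtFilter _ _) hc.continuousAt

lemma gaussPrim_neg (x : ℝ) : gaussPrim (-x) = -gaussPrim x := by
  unfold gaussPrim
  rw [← intervalIntegral.integral_symm]
  have := intervalIntegral.integral_comp_neg (a := x) (b := 0)
    (fun y : ℝ => Real.exp (-(1 / 2) * y ^ 2))
  simpa using this.symm

lemma gaussPrim_tendsto_atTop :
    Tendsto gaussPrim atTop (𝓝 (Real.sqrt (2 * Real.pi) / 2)) := by
  have h := intervalIntegral_tendsto_integral_Ioi (μ := volume) (0 : ℝ)
    (integrable_exp_neg_mul_sq (b := 1 / 2) (by norm_num)).integrableOn tendsto_id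
  rw [integral_gaussian_Ioi] at h
  have e : Real.pi / (1 / 2) = 2 * Real.pi := by ring
  rw [e] at h
  exact h

lemma gaussPrim_tendsto_atBot :
    Tendsto gaussPrim atBot (𝓝 (-(Real.sqrt (2 * Real.pi) / 2))) := by
  have h := (gaussPrim_tendsto_atTop.comp tendsto_neg_atBot_atTop).neg
  refine h.congr fun x => ?_
  simp [gaussPrim_neg]

/-- An antiderivative in `s` of `e^{-c² s / 2}` times the first-passage density. -/
noncomputable def passagePrim (c t s : ℝ) : ℝ :=
  Real.exp (-(c * t)) / Real.sqrt (2 * Real.pi) *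
    (gaussPrim (c * Real.sqrt s - t * (Real.sqrt s)⁻¹) -
      Real.exp (2 * (c * t)) * gaussPrim (c * Real.sqrt s + t * (Real.sqrt s)⁻¹))

lemma passagePrim_hasDerivAt (c t : ℝ) {s : ℝ} (hs : 0 < s) :
    HasDerivAt (passagePrim c t)
      (Real.exp (-(c ^ 2 / 2 * s)) *
        (t * Real.exp (-t ^ 2 / (2 * s)) / Real.sqrt (2 * Real.pi * s ^ 3))) s := by
  have hr : 0 < Real.sqrt s := Real.sqrt_pos.2 hs
  have hsq := Real.hasDerivAt_sqrt hs.ne'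
  have hinv := hsq.inv hr.ne'
  have hu := (gaussPrim_hasDerivAt _).comp s ((hsq.const_mul c).sub (hinv.const_mul t))
  have hv := (gaussPrim_hasDerivAt _).comp s ((hsq.const_mul c).add (hinv.const_mul t))
  refine ((hu.sub (hv.const_mul (Real.exp (2 * (c * t))))).const_mul
    (Real.exp (-(c * t)) / Real.sqrt (2 * Real.pi))).congr_deriv ?_
  simp only [Pi.sub_apply, Pi.add_apply, Pi.inv_apply]
  have hs2 : s = Real.sqrt s ^ 2 := (Real.sq_sqrt hs.le).symm
  have h3 : Real.sqrt (2 * Real.pi * s ^ 3) = Real.sqrt (2 * Real.pi) * Real.sqrt s ^ 3 := by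
    rw [Real.sqrt_mul (by positivity)]
    congr 1
    rw [Real.sqrt_eq_iff_mul_self_eq (by positivity) (by positivity)]
    nth_rewrite 1 [hs2]
    ring
  rw [h3]
  have hp : 0 < Real.sqrt (2 * Real.pi) := Real.sqrt_pos.2 (by positivity)
  generalize Real.sqrt (2 * Real.pi) = p at *
  generalize Real.sqrt s = r at *
  subst hs2
  have e1 : Real.exp (-(1 / 2) * (c * r - t * r⁻¹) ^ 2) =
      Real.exp (c * t) * (Real.exp (-(c ^ 2 / 2 * r ^ 2)) * Real.exp (-t ^ 2 / (2 * r ^ 2))) := by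
    rw [← Real.exp_add, ← Real.exp_add]
    congr 1
    field_simp
    ring
  have e2 : Real.exp (-(1 / 2) * (c * r + t * r⁻¹) ^ 2) =
      Real.exp (-(c * t)) *
        (Real.exp (-(c ^ 2 / 2 * r ^ 2)) * Real.exp (-t ^ 2 / (2 * r ^ 2))) := by
    rw [← Real.exp_add, ← Real.exp_add]
    congr 1
    field_simp
    ring
  have e3 : Real.exp (2 * (c * t)) = Real.exp (c * t) * Real.exp (c * t) := by
    rw [← Real.exp_add]
    congr 1
    ring
  rw [e1, e2, e3, Real.exp_neg (c * t)]
  have hE : 0 < Real.exp (c * t) := Real.exp_pos _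
  field_simp
  ring

lemma laplace_first_passage {c t : ℝ} (hc : 0 < c) (ht : 0 < t) :
    ∫ s in Set.Ioi (0 : ℝ), Real.exp (-(c ^ 2 / 2 * s)) *
        (t * Real.exp (-t ^ 2 / (2 * s)) / Real.sqrt (2 * Real.pi * s ^ 3)) =
      Real.exp (-(c * t)) := by
  set L := Real.sqrt (2 * Real.pi) / 2 with hL
  set A := Real.exp (-(c * t)) / Real.sqrt (2 * Real.pi) with hA
  have hp : 0 < Real.sqrt (2 * Real.pi) := Real.sqrt_pos.2 (by positivity)
  have htop : Tendsto (passagePrim c t) atTop (𝓝 (A * (L - Real.exp (2 * (c * t)) * L))) := by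
    have h1 : Tendsto (fun s => c * Real.sqrt s) atTop atTop :=
      Real.tendsto_sqrt_atTop.const_mul_atTop hc
    have h2 : Tendsto (fun s => t * (Real.sqrt s)⁻¹) atTop (𝓝 (t * 0)) :=
      (tendsto_inv_atTop_zero.comp Real.tendsto_sqrt_atTop).const_mul t
    have hu : Tendsto (fun s => c * Real.sqrt s - t * (Real.sqrt s)⁻¹) atTop atTop := by
      simpa only [sub_eq_add_neg] using h1.atTop_add h2.neg
    have hv := h1.atTop_add h2
    exact ((gaussPrim_tendsto_atTop.comp hu).sub
      ((gaussPrim_tendsto_atTop.comp hv).const_mul _)).const_mul A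
  have hzero : Tendsto (passagePrim c t) (𝓝[>] 0)
      (𝓝 (A * (-L - Real.exp (2 * (c * t)) * L))) := by
    have h0 : Tendsto Real.sqrt (𝓝[>] 0) (𝓝[>] 0) := by
      refine tendsto_nhdsWithin_iff.2 ⟨?_, ?_⟩
      · have := Real.continuous_sqrt.tendsto 0
        rw [Real.sqrt_zero] at this
        exact this.mono_left nhdsWithin_le_nhds
      · filter_upwards [self_mem_nhdsWithin] with s hs using Real.sqrt_pos.2 hs
    have h1 : Tendsto (fun s => c * Real.sqrt s) (𝓝[>] 0) (𝓝 (c * 0)) :=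
      (h0.mono_right nhdsWithin_le_nhds).const_mul c
    have h2 : Tendsto (fun s => t * (Real.sqrt s)⁻¹) (𝓝[>] 0) atTop :=
      (tendsto_inv_nhdsGT_zero.comp h0).const_mul_atTop ht
    have hu : Tendsto (fun s => c * Real.sqrt s - t * (Real.sqrt s)⁻¹) (𝓝[>] 0) atBot := by
      simpa only [sub_eq_add_neg, Function.comp_def] using
        h1.add_atBot (tendsto_neg_atTop_atBot.comp h2)
    have hv := h1.add_atTop h2
    exact ((gaussPrim_tendsto_atBot.comp hu).sub
      ((gaussPrim_tendsto_atTop.comp hv).const_mul _)).const_mul A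
  -- At `s = 0` the junk value `0⁻¹ = 0` makes `passagePrim` discontinuous from the right, so its
  -- value there is replaced by the one-sided limit.
  set F := Function.update (passagePrim c t) 0 (A * (-L - Real.exp (2 * (c * t)) * L)) with hF
  have hev : ∀ s : ℝ, 0 < s → F =ᶠ[𝓝 s] passagePrim c t := fun s hs => by
    filter_upwards [lt_mem_nhds hs] with x hx
    exact Function.update_of_ne hx.ne' _ _
  have hcont : ContinuousWithinAt F (Set.Ici 0) 0 := by
    rw [hF, continuousWithinAt_update_same, Set.Ici_sdiff_left]
    exact hzero
  rw [integral_Ioi_of_hasDerivAt_of_nonneg hcont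
    (fun s hs => (passagePrim_hasDerivAt c t hs).congr_of_eventuallyEq (hev s hs))
    (fun s _ => by positivity)
    (htop.congr' (by
      filter_upwards [eventually_gt_atTop 0] with s hs
      exact (hev s hs).self_of_nhds.symm))]
  rw [hF, Function.update_self, hA, hL]
  field_simp
  ring

/-- The rates `μₙ = λ^{1/2ⁿ} 2^{1 - 1/2ⁿ}` satisfy `μₙ₊₁² / 2 = μₙ`. -/
lemma rate_sq {lam : ℝ} (hlam : 0 < lam) (n : ℕ) :
    (lam ^ ((1 : ℝ) / 2 ^ (n + 1)) * (2 : ℝ) ^ (1 - (1 : ℝ) / 2 ^ (n + 1))) ^ 2 / 2 =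
      lam ^ ((1 : ℝ) / 2 ^ n) * (2 : ℝ) ^ (1 - (1 : ℝ) / 2 ^ n) := by
  have e1 : (lam ^ ((1 : ℝ) / 2 ^ (n + 1))) ^ 2 = lam ^ ((1 : ℝ) / 2 ^ n) := by
    rw [← Real.rpow_mul_natCast hlam.le]
    congr 1
    rw [pow_succ]
    push_cast
    field_simp
  have e2 : ((2 : ℝ) ^ (1 - (1 : ℝ) / 2 ^ (n + 1))) ^ 2 = 2 ^ (1 - (1 : ℝ) / 2 ^ n) * 2 := by
    rw [← Real.rpow_mul_natCast (by norm_num), ← Real.rpow_add_one (by norm_num)]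
    congr 1
    rw [pow_succ]
    push_cast
    field_simp
    ring
  rw [mul_pow, e1, e2]
  ring

/-- Iterating the Brownian first-passage subordination kernel on `e^{−λt}` gives
`exp(−t λ^{1/2ⁿ} 2^{1−1/2ⁿ})`. -/
theorem iterated_first_passage_exponential (lam : ℝ) (hlam : 0 < lam) (g : ℕ → ℝ → ℝ)
    (hg0 : ∀ t : ℝ, 0 < t → g 0 t = Real.exp (-lam * t))
    (hgrec : ∀ j : ℕ, ∀ t : ℝ, 0 < t → g (j + 1) t =
      ∫ s in Set.Ioi (0 : ℝ),
        g j s * (t * Real.exp (-t ^ 2 / (2 * s)) / Real.sqrt (2 * Real.pi * s ^ 3)))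
    (n : ℕ) (t : ℝ) (ht : 0 < t) :
    g n t = Real.exp (-t * lam ^ ((1 : ℝ) / 2 ^ n) * (2 : ℝ) ^ (1 - (1 : ℝ) / 2 ^ n)) := by
  induction n generalizing t with
  | zero => rw [hg0 t ht]; simp; ring
  | succ n ih =>
    rw [hgrec n t ht]
    have hpos : 0 < lam ^ ((1 : ℝ) / 2 ^ (n + 1)) * (2 : ℝ) ^ (1 - (1 : ℝ) / 2 ^ (n + 1)) := by
      positivity
    rw [show -t * lam ^ ((1 : ℝ) / 2 ^ (n + 1)) * (2 : ℝ) ^ (1 - (1 : ℝ) / 2 ^ (n + 1)) =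
      -(lam ^ ((1 : ℝ) / 2 ^ (n + 1)) * (2 : ℝ) ^ (1 - (1 : ℝ) / 2 ^ (n + 1)) * t) by ring,
      ← laplace_first_passage hpos ht]
    refine setIntegral_congr_fun measurableSet_Ioi fun s hs => ?_
    simp only [ih s hs, rate_sq hlam]
    congr 2
    ring
end

section
/- Let n ≥ 1, let λ : ℕ → ℝ be pairwise distinct positive rates, set λ_0 = 0, and define f_0(t) = 0, f_1(t) = exp(−t·λ_1^{1/2^n}·2^{1−1/2^n}), and for k ≥ 2, f_k(t) = (∏_{j=1}^{k−1} λ_j) ∑_{m=1}^{k} exp(−t·λ_m^{1/2^n}·2^{1−1/2^n})/∏_{l=1, l≠m}^{k} (λ_l − λ_m). Then for every k ≥ 1 and every t, the iterated derivative of order 2^n satisfies (d/dt)^{2^n} f_k(t) = 2^{2^n − 1}·(λ_k·f_k(t) − λ_{k−1}·f_{k−1}(t)). -/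
/-!
For `k ≥ 1`, `f k` is a linear combination of exponentials `exp (c m * t)` with
`c m = -(lam m) ^ (1 / 2 ^ n) * 2 ^ (1 - 1 / 2 ^ n)`. Since `2 ^ n` is even,
`c m ^ 2 ^ n = 2 ^ (2 ^ n - 1) * lam m`, so differentiating `2 ^ n` times multiplies the `m`-th term
by `2 ^ (2 ^ n - 1) * lam m`. It remains to compare coefficients: the denominators satisfy
`D k m = D (k - 1) m * (lam k - lam m)`, hence `1 / D (k - 1) m = (lam k - lam m) / D k m`, and the
numerator `lam k - lam m` vanishes at `m = k`, so that both sums can be taken over `m ≤ k`.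
-/

open Finset

lemma iteratedDeriv_sum_exp (s : Finset ℕ) (a c : ℕ → ℝ) (N : ℕ) :
    iteratedDeriv N (fun t : ℝ => ∑ m ∈ s, a m * Real.exp (c m * t))
      = fun t => ∑ m ∈ s, a m * c m ^ N * Real.exp (c m * t) := by
  induction N with
  | zero => simp
  | succ N ih =>
    rw [iteratedDeriv_succ, ih]
    funext t
    apply HasDerivAt.deriv
    refine HasDerivAt.fun_sum fun m _ => ?_
    have h := (((hasDerivAt_id t).const_mul (c m)).exp).const_mul (a m * c m ^ N)
    refine h.congr_deriv ?_
    simp only [id]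
    ring

/-- The `2 ^ n`-th power of the exponent; the sign disappears because `2 ^ n` is even. -/
lemma exponent_pow (n : ℕ) (hn : 1 ≤ n) (x : ℝ) (hx : 0 < x) :
    (-(x ^ ((1 : ℝ) / 2 ^ n) * (2 : ℝ) ^ (1 - (1 : ℝ) / 2 ^ n))) ^ (2 ^ n)
      = (2 : ℝ) ^ (2 ^ n - 1) * x := by
  have he : Even (2 ^ n) := (even_two).pow_of_ne_zero (by omega)
  have h0 : (2 : ℝ) ^ n ≠ 0 := by positivity
  have h1 : 1 ≤ 2 ^ n := Nat.one_le_two_pow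
  rw [he.neg_pow, mul_pow, ← Real.rpow_natCast, ← Real.rpow_mul hx.le,
    ← Real.rpow_natCast ((2 : ℝ) ^ _), ← Real.rpow_mul (by norm_num : (0 : ℝ) ≤ 2),
    ← Real.rpow_natCast 2 (2 ^ n - 1), Nat.cast_sub h1]
  push_cast
  rw [one_div, inv_mul_cancel₀ h0, sub_mul, inv_mul_cancel₀ h0, Real.rpow_one, one_mul, mul_comm]

/-- Passing from `k` to `k + 1` adds the single factor `lam (k + 1) - lam m` to the denominator. -/
lemma prod_erase_succ (lam : ℕ → ℝ) (k m : ℕ) (hm : m ∈ Icc 1 k) :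
    ∏ l ∈ (Icc 1 (k + 1)).erase m, (lam l - lam m)
      = (∏ l ∈ (Icc 1 k).erase m, (lam l - lam m)) * (lam (k + 1) - lam m) := by
  have hm' := mem_Icc.1 hm
  have h : (Icc 1 (k + 1)).erase m = insert (k + 1) ((Icc 1 k).erase m) := by
    ext l
    simp only [mem_erase, mem_Icc, mem_insert]
    omega
  rw [h, prod_insert (by simp), mul_comm]

/-- The state probabilities of the birth process subordinated to the `n`-fold
iterated first-passage time satisfy the `2ⁿ`-th order difference-differential
equation (Theorem 2.7). -/
theorem order_two_pow_n_equation (n : ℕ) (hn : 1 ≤ n) (lam : ℕ → ℝ) (hlam0 : lam 0 = 0)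
    (hpos : ∀ i, 1 ≤ i → 0 < lam i)
    (hdist : ∀ i j, 1 ≤ i → 1 ≤ j → i ≠ j → lam i ≠ lam j)
    (f : ℕ → ℝ → ℝ)
    (hf0 : ∀ t : ℝ, f 0 t = 0)
    (hf1 : ∀ t : ℝ, f 1 t =
      Real.exp (-t * lam 1 ^ ((1 : ℝ) / 2 ^ n) * (2 : ℝ) ^ (1 - (1 : ℝ) / 2 ^ n)))
    (hfk : ∀ k, 2 ≤ k → ∀ t : ℝ, f k t =
      (∏ j ∈ Finset.Icc 1 (k - 1), lam j) *
        ∑ m ∈ Finset.Icc 1 k,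
          Real.exp (-t * lam m ^ ((1 : ℝ) / 2 ^ n) * (2 : ℝ) ^ (1 - (1 : ℝ) / 2 ^ n)) /
            ∏ l ∈ (Finset.Icc 1 k).erase m, (lam l - lam m))
    (k : ℕ) (hk : 1 ≤ k) (t : ℝ) :
    iteratedDeriv (2 ^ n) (f k) t
      = (2 : ℝ) ^ (2 ^ n - 1) * (lam k * f k t - lam (k - 1) * f (k - 1) t) := by
  set c : ℕ → ℝ := fun m =>
    -(lam m ^ ((1 : ℝ) / 2 ^ n) * (2 : ℝ) ^ (1 - (1 : ℝ) / 2 ^ n)) with hc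
  set D : ℕ → ℕ → ℝ := fun k m => ∏ l ∈ (Icc 1 k).erase m, (lam l - lam m) with hD
  set P : ℕ → ℝ := fun k => ∏ j ∈ Icc 1 k, lam j with hP
  -- The formula for `2 ≤ k` also covers `k = 1`, where all products are empty.
  have hf : ∀ k, 1 ≤ k → f k =
      fun t => ∑ m ∈ Icc 1 k, P (k - 1) / D k m * Real.exp (c m * t) := by
    intro k hk
    funext t
    have harg : ∀ m, -t * lam m ^ ((1 : ℝ) / 2 ^ n) * (2 : ℝ) ^ (1 - (1 : ℝ) / 2 ^ n)
        = c m * t := fun m => by simp only [hc]; ring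
    rcases hk.eq_or_lt with rfl | hk
    · rw [hf1, harg]
      simp [hP, hD]
    · rw [hfk k hk, mul_sum]
      refine sum_congr rfl fun m _ => ?_
      rw [harg]
      simp only [hP, hD]
      ring
  have hpow : ∀ m, 1 ≤ m → c m ^ (2 ^ n) = (2 : ℝ) ^ (2 ^ n - 1) * lam m := fun m hm =>
    exponent_pow n hn (lam m) (hpos m hm)
  obtain ⟨k, rfl⟩ : ∃ j, k = j + 1 := ⟨k - 1, by omega⟩
  rw [Nat.add_sub_cancel]
  have hprev : lam k * f k t
      = ∑ m ∈ Icc 1 (k + 1),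
          P k / D (k + 1) m * (lam (k + 1) - lam m) * Real.exp (c m * t) := by
    rw [sum_Icc_succ_top (by omega), sub_self, mul_zero, zero_mul, add_zero]
    rcases Nat.eq_zero_or_pos k with rfl | hk
    · simp [hlam0]
    · rw [hf k hk, mul_sum]
      refine sum_congr rfl fun m hm => ?_
      have hm' := mem_Icc.1 hm
      have hne : lam (k + 1) - lam m ≠ 0 :=
        sub_ne_zero.2 (hdist _ _ (by omega) hm'.1 (by omega))
      have hPk : P k = P (k - 1) * lam k := by
        obtain ⟨j, rfl⟩ : ∃ j, k = j + 1 := ⟨k - 1, by omega⟩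
        simp only [hP, Nat.add_sub_cancel]
        exact prod_Icc_succ_top (by omega) _
      have hDk : D (k + 1) m = D k m * (lam (k + 1) - lam m) := prod_erase_succ lam k m hm
      rw [hDk, hPk, ← div_div, div_mul_cancel₀ _ hne]
      ring
  rw [hprev, hf (k + 1) hk, iteratedDeriv_sum_exp, Nat.add_sub_cancel]
  simp only []
  rw [mul_sum, ← sum_sub_distrib, mul_sum]
  refine sum_congr rfl fun m hm => ?_
  rw [hpow m (mem_Icc.1 hm).1]
  ring
end

section
/- For every λ ≥ 0 and t > 0, ∫_0^t e^{−λ s} / (π √(s(t−s))) ds = e^{−λt/2} · ∑_{k=0}^{∞} (λt/4)^{2k}/((k!)²), i.e. the arcsine-density Laplace integral equals e^{−λt/2} I_0(λt/2), where I_0(z) = ∑_{k=0}^∞ (z/2)^{2k}/(k!)² is the zero-order modified Bessel function. -/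
/-!
The substitution `s = t/2 (1 - cos θ)`, for which `√(s (t - s)) = t/2 sin θ` and
`ds = t/2 sin θ dθ`, removes both endpoint singularities and turns the arcsine integral into
`e^{-λt/2} π⁻¹ ∫₀^π exp (λt/2 · cos θ) dθ`. Expanding the exponential and integrating term by term
leaves the moments `∫₀^π cosⁿ θ dθ`: by the reduction formula they vanish for odd `n`, and for
`n = 2k` they equal `π (2k)! / (4^k (k!)²)`, which produces the Bessel series.
-/

theorem integral_cos_pow_odd_zero_pi (k : ℕ) :
    ∫ x in (0 : ℝ)..Real.pi, Real.cos x ^ (2 * k + 1) = 0 := by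
  induction k with
  | zero => simp
  | succ k ih =>
    rw [show 2 * (k + 1) + 1 = (2 * k + 1) + 2 by ring, integral_cos_pow, ih]
    simp

theorem integral_cos_pow_even_zero_pi (k : ℕ) :
    ∫ x in (0 : ℝ)..Real.pi, Real.cos x ^ (2 * k)
      = Real.pi * (Nat.factorial (2 * k) : ℝ) / (4 ^ k * (Nat.factorial k : ℝ) ^ 2) := by
  induction k with
  | zero => simp
  | succ k ih =>
    rw [show 2 * (k + 1) = 2 * k + 2 by ring, integral_cos_pow, ih]
    simp only [Real.sin_pi, Real.sin_zero, Nat.factorial_succ]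
    have := Nat.factorial_ne_zero k
    push_cast
    field_simp
    ring

/-- Bessel's integral `π I₀(z) = ∫₀^π exp (z cos θ) dθ`, as a convergent series. -/
theorem hasSum_integral_exp_mul_cos (z : ℝ) :
    HasSum (fun k : ℕ => Real.pi * ((z / 2) ^ (2 * k) / (Nat.factorial k : ℝ) ^ 2))
      (∫ x in (0 : ℝ)..Real.pi, Real.exp (z * Real.cos x)) := by
  have h : HasSum (fun n : ℕ => ∫ x in (0 : ℝ)..Real.pi,
      (z * Real.cos x) ^ n / (Nat.factorial n : ℝ))
      (∫ x in (0 : ℝ)..Real.pi, Real.exp (z * Real.cos x)) := by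
    refine intervalIntegral.hasSum_integral_of_dominated_convergence
      (fun n _ => |z| ^ n / (Nat.factorial n : ℝ)) ?_ ?_ ?_ ?_ ?_
    · intro n
      exact Continuous.aestronglyMeasurable (by fun_prop)
    · intro n
      refine Filter.Eventually.of_forall fun x _ => ?_
      rw [norm_div, norm_pow, norm_mul, Real.norm_natCast, Real.norm_eq_abs, Real.norm_eq_abs]
      gcongr
      exact mul_le_of_le_one_right (abs_nonneg z) (Real.abs_cos_le_one x)
    · exact Filter.Eventually.of_forall fun x _ => Real.summable_pow_div_factorial |z|
    · exact intervalIntegrable_const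
    · refine Filter.Eventually.of_forall fun x _ => ?_
      rw [Real.exp_eq_exp_ℝ]
      exact NormedSpace.expSeries_div_hasSum_exp _
  have hmom (n : ℕ) : ∫ x in (0 : ℝ)..Real.pi, (z * Real.cos x) ^ n / (Nat.factorial n : ℝ)
      = z ^ n / (Nat.factorial n : ℝ) * ∫ x in (0 : ℝ)..Real.pi, Real.cos x ^ n := by
    rw [← intervalIntegral.integral_const_mul]
    congr 1
    ext x
    ring
  have hinj : Function.Injective (fun k : ℕ => 2 * k) := fun a b hab => by
    simpa using hab
  rw [← hinj.hasSum_iff] at h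
  · convert h using 2 with k
    simp only [Function.comp_apply]
    rw [hmom, integral_cos_pow_even_zero_pi]
    have h1 := Nat.factorial_ne_zero k
    have h2 := Nat.factorial_ne_zero (2 * k)
    rw [div_pow, pow_mul 2 2 k]
    norm_num
    field_simp
  · intro n hn
    obtain ⟨k, rfl | rfl⟩ := Nat.even_or_odd' n
    · exact absurd ⟨k, rfl⟩ hn
    · rw [hmom, integral_cos_pow_odd_zero_pi, mul_zero]

theorem integral_arcsine_eq_integral_exp_cos (lam t : ℝ) (ht : 0 < t) :
    ∫ s in (0 : ℝ)..t, Real.exp (-lam * s) / (Real.pi * Real.sqrt (s * (t - s)))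
      = Real.exp (-lam * t / 2) / Real.pi *
          ∫ x in (0 : ℝ)..Real.pi, Real.exp (lam * t / 2 * Real.cos x) := by
  have hsin : ∀ x ∈ Set.Ioo 0 Real.pi, 0 < Real.sin x := fun x hx => Real.sin_pos_of_mem_Ioo hx
  have key := MeasureTheory.integral_Icc_deriv_smul_of_deriv_nonneg (a := 0) (b := Real.pi)
    (f := fun x => t / 2 * (1 - Real.cos x)) (f' := fun x => t / 2 * Real.sin x)
    (g := fun s => Real.exp (-lam * s) / (Real.pi * Real.sqrt (s * (t - s))))
    (by fun_prop)
    (fun x _ => by simpa using ((Real.hasDerivAt_cos x).const_sub 1).const_mul (t / 2))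
    (fun x hx => by have := hsin x hx; positivity) Real.pi_pos.le
  have h0 : t / 2 * (1 - Real.cos 0) = 0 := by simp
  have h1 : t / 2 * (1 - Real.cos Real.pi) = t := by rw [Real.cos_pi]; ring
  simp only [h0, h1] at key
  rw [intervalIntegral.integral_of_le ht.le, ← MeasureTheory.integral_Icc_eq_integral_Ioc, ← key,
    ← intervalIntegral.integral_const_mul, intervalIntegral.integral_of_le Real.pi_pos.le,
    -- At the endpoints `sin x = 0`, the transformed integrand takes a junk value.
    MeasureTheory.integral_Icc_eq_integral_Ioo, MeasureTheory.integral_Ioc_eq_integral_Ioo]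
  refine MeasureTheory.setIntegral_congr_fun measurableSet_Ioo fun x hx => ?_
  have hx' := hsin x hx
  have hsqrt : Real.sqrt (t / 2 * (1 - Real.cos x) * (t - t / 2 * (1 - Real.cos x)))
      = t / 2 * Real.sin x := by
    rw [← Real.sqrt_sq (show 0 ≤ t / 2 * Real.sin x by positivity)]
    congr 1
    rw [mul_pow, Real.sin_sq]
    ring
  have hexp : Real.exp (-lam * (t / 2 * (1 - Real.cos x)))
      = Real.exp (-lam * t / 2) * Real.exp (lam * t / 2 * Real.cos x) := by
    rw [← Real.exp_add]
    congr 1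
    ring
  simp only [smul_eq_mul]
  rw [hsqrt, hexp]
  field_simp


/-- Arcsine-density Laplace integral:
`∫_0^t e^{−λs}/(π√(s(t−s))) ds = e^{−λt/2} I₀(λt/2)` with
`I₀(z) = ∑ (z/2)^{2k}/(k!)²`. -/
theorem arcsine_laplace_bessel (lam t : ℝ) (hlam : 0 ≤ lam) (ht : 0 < t) :
    ∫ s in (0 : ℝ)..t, Real.exp (-lam * s) / (Real.pi * Real.sqrt (s * (t - s)))
      = Real.exp (-lam * t / 2) *
          ∑' k : ℕ, (lam * t / 4) ^ (2 * k) / ((Nat.factorial k : ℝ)) ^ 2 := by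
  have h := (hasSum_integral_exp_mul_cos (lam * t / 2)).tsum_eq
  rw [integral_arcsine_eq_integral_exp_cos lam t ht, ← h, tsum_mul_left,
    show lam * t / 2 / 2 = lam * t / 4 by ring]
  field_simp
end

section
/- Let k ≥ 2, let λ_1, …, λ_k be pairwise distinct positive reals, and let p_k(s) = (∏_{j=1}^{k−1} λ_j) ∑_{m=1}^{k} e^{−λ_m s}/∏_{l=1, l≠m}^{k} (λ_l − λ_m). Then for every t > 0, (1/t)·∫_0^t p_k(s) ds = (1/(λ_k t)) · ( 1 − ∑_{m=1}^{k} ∏_{l=1, l≠m}^{k} (λ_l/(λ_l − λ_m)) · e^{−λ_m t} ). -/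
open Finset

/-!
Write `A m = ∏_{l ≠ m} λ_l / (λ_l - λ_m)`. The function
`s ↦ -(1 / λ_k) ∑ m, A m * exp (-λ_m s)` is an antiderivative of `p_k`, because
`λ_m * ∏_{l ≠ m} λ_l = λ_k * ∏_{j < k} λ_j`. By the fundamental theorem of calculus the integral
of `p_k` over `[0, t]` is `(1 / λ_k) (∑ m, A m - ∑ m, A m * exp (-λ_m t))`. Finally `A m` is the
value at `0` of the `m`-th Lagrange basis polynomial for the nodes `λ_1, …, λ_k`
(`sum_prod_div_sub_eq_one`), so `∑ m, A m = 1`.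
-/

/-- The Lagrange basis polynomials at the nodes `x i` sum to `1`; this is that identity evaluated
at `0`. -/
theorem sum_prod_div_sub_eq_one (S : Finset ℕ) (hS : S.Nonempty) (x : ℕ → ℝ)
    (hx : Set.InjOn x S) :
    ∑ m ∈ S, ∏ l ∈ S.erase m, x l / (x l - x m) = 1 := by
  have h := congrArg (Polynomial.eval 0) (Lagrange.sum_basis hx hS)
  rw [Polynomial.eval_finsetSum, Polynomial.eval_one] at h
  rw [← h]
  refine Finset.sum_congr rfl fun m _ => ?_
  rw [Lagrange.basis, Polynomial.eval_prod]
  refine Finset.prod_congr rfl fun l _ => ?_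
  rw [Lagrange.basisDivisor, ← neg_sub (x l) (x m)]
  simp [div_eq_inv_mul, inv_neg, -neg_sub]

/-- Distribution of the nonlinear birth process stopped at the (uniformly
distributed) sojourn time of a Brownian bridge: formula (brid). -/
theorem birth_process_at_bridge_sojourn (k : ℕ) (hk : 2 ≤ k) (lam : ℕ → ℝ)
    (hpos : ∀ i ∈ Finset.Icc 1 k, 0 < lam i)
    (hdist : ∀ i ∈ Finset.Icc 1 k, ∀ j ∈ Finset.Icc 1 k, i ≠ j → lam i ≠ lam j)
    (t : ℝ) (ht : 0 < t) :
    (1 / t) * ∫ s in (0 : ℝ)..t,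
        ((∏ j ∈ Finset.Icc 1 (k - 1), lam j) *
          ∑ m ∈ Finset.Icc 1 k,
            Real.exp (-(lam m) * s) / ∏ l ∈ (Finset.Icc 1 k).erase m, (lam l - lam m))
      = (1 / (lam k * t)) *
          (1 - ∑ m ∈ Finset.Icc 1 k,
            (∏ l ∈ (Finset.Icc 1 k).erase m, lam l / (lam l - lam m)) *
              Real.exp (-(lam m) * t)) := by
  have hkk : k ∈ Finset.Icc 1 k := Finset.mem_Icc.2 ⟨by omega, le_rfl⟩
  have hk0 : lam k ≠ 0 := (hpos k hkk).ne'
  have hinj : Set.InjOn lam (Finset.Icc 1 k : Finset ℕ) := fun i hi j hj hij => by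
    by_contra hne
    exact hdist i hi j hj hne hij
  have hsum := sum_prod_div_sub_eq_one (Finset.Icc 1 k) ⟨k, hkk⟩ lam hinj
  have hprod : ∀ m ∈ Finset.Icc 1 k,
      lam m * ∏ l ∈ (Finset.Icc 1 k).erase m, lam l
        = lam k * ∏ j ∈ Finset.Icc 1 (k - 1), lam j := by
    intro m hm
    have he : Finset.Icc 1 (k - 1) = (Finset.Icc 1 k).erase k := by
      ext i
      simp only [Finset.mem_Icc, Finset.mem_erase]
      omega
    rw [he, Finset.mul_prod_erase _ _ hm, Finset.mul_prod_erase _ _ hkk]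
  have hderiv : ∀ s : ℝ, HasDerivAt
      (fun s : ℝ => -(1 / lam k) * ∑ m ∈ Finset.Icc 1 k,
        (∏ l ∈ (Finset.Icc 1 k).erase m, lam l / (lam l - lam m)) * Real.exp (-(lam m) * s))
      ((∏ j ∈ Finset.Icc 1 (k - 1), lam j) * ∑ m ∈ Finset.Icc 1 k,
        Real.exp (-(lam m) * s) / ∏ l ∈ (Finset.Icc 1 k).erase m, (lam l - lam m)) s := by
    intro s
    have h := (HasDerivAt.fun_sum (u := Finset.Icc 1 k) fun m _ =>
      (((hasDerivAt_id' s).const_mul (-(lam m))).exp).const_mul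
        (∏ l ∈ (Finset.Icc 1 k).erase m, lam l / (lam l - lam m))).const_mul (-(1 / lam k))
    refine h.congr_deriv ?_
    rw [Finset.mul_sum, Finset.mul_sum]
    refine Finset.sum_congr rfl fun m hm => ?_
    have hP : ∏ j ∈ Finset.Icc 1 (k - 1), lam j
        = (1 / lam k) * (lam m * ∏ l ∈ (Finset.Icc 1 k).erase m, lam l) := by
      rw [hprod m hm]
      field_simp
    rw [hP, Finset.prod_div_distrib]
    ring
  rw [intervalIntegral.integral_eq_sub_of_hasDerivAt (fun s _ => hderiv s)
    (Continuous.intervalIntegrable (by fun_prop) 0 t)]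
  simp only [mul_zero, Real.exp_zero, mul_one]
  rw [hsum]
  field_simp
  ring
end

section
/- Let 0 < ν < 1, ζ > 0 and t > 0. Then E_{ν,1}(−ζ t^ν) = (sin(νπ)/π) · ∫_0^∞ r^{ν−1} e^{−r ζ^{1/ν} t} / (r^{2ν} + 2 r^ν cos(νπ) + 1) dr, where E_{ν,1}(x) = ∑_{h=0}^∞ x^h/Γ(νh+1). -/
/-!
The proof is the classical contour argument, carried out in the logarithmic coordinate `s = e^w`, in
which the plane cut along the negative axis becomes the strip `|Im w| ≤ π` and no branches have to be
chosen. Hankel's contour becomes a hairpin of horizontal rays `Im w = ±π` joined by a segment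
`Re w = a`, which Cauchy's theorem on rectangles allows to move (`hairpin_eq`).

Hankel's formula `1/Γ(z) = (2πi)⁻¹ ∫ e^s s^{-z} ds` (`hairpin_Phi`) holds for `z ≤ 1` by letting
`a → -∞` and using the reflection formula, and for larger `z` by integration by parts. With `y = ζ t^ν`
and the segment placed where `|s|^ν > y`, summing it against `(-y)^k` at `z = νk + 1` gives
(`hairpin_hasSum`)
`E_{ν,1}(-y) = (2πi)⁻¹ ∫ e^s s^ν / (s^ν + y) ds/s`.
Since `ν < 1`, the denominator has no zero with `|arg s| ≤ π`, so the contour may now be collapsed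
onto the cut (`hairpin_resolv_eq`). The jump of the integrand across the cut is
`2i sin(νπ) y r^ν e^{-r} / (r^{2ν} + 2 y r^ν cos νπ + y²)`, and rescaling `r` by `y^{1/ν}` gives the
representation.
-/

open MeasureTheory

/-- The Mittag--Leffler function `E_{ν,β}(x) = ∑_{h≥0} x^h/Γ(νh+β)`. -/
noncomputable def mittagLeffler (ν β x : ℝ) : ℝ :=
  ∑' h : ℕ, x ^ h / Real.Gamma (ν * h + β)

namespace Hairpin
open Complex Set Filter Topology

/-! ### Integrals along a hairpin contour -/

/-- The jump `f(u + iπ) - f(u - iπ)` between the two edges of the strip `|Im w| ≤ π`; in the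
coordinate `s = e^w` these are the two sides of the cut along the negative axis. -/
noncomputable def jump (f : ℂ → ℂ) (u : ℝ) : ℂ :=
  f (u + (Real.pi : ℝ) * I) - f (u + ((-Real.pi : ℝ) : ℂ) * I)

/-- The integral of `f` along the hairpin which comes in along `Im w = -π` from `+∞` to `a - iπ`,
runs up the segment `Re w = a`, and leaves along `Im w = π`. Under `s = e^w` this is Hankel's
contour around the negative axis, with a circle of radius `e^a`. The two rays are combined into
the single integral of `jump f`, so only the jump has to be integrable. -/
noncomputable def hairpin (f : ℂ → ℂ) (a : ℝ) : ℂ :=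
  I * (∫ θ in (-Real.pi)..Real.pi, f (a + θ * I)) + ∫ u in Ioi a, jump f u

theorem continuous_arc {f : ℂ → ℂ} (hf : ∀ w : ℂ, |w.im| ≤ Real.pi → DifferentiableAt ℂ f w)
    (a : ℝ) : ContinuousOn (fun θ : ℝ => f (a + θ * I)) (uIcc (-Real.pi) Real.pi) := by
  intro θ hθ
  rw [uIcc_of_le (by linarith [Real.pi_pos])] at hθ
  have h1 : ContinuousAt f (a + θ * I) := (hf _ (by simpa using abs_le.2 hθ)).continuousAt
  exact (ContinuousAt.comp (f := fun θ : ℝ => (a + θ * I : ℂ)) h1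
    (by fun_prop)).continuousWithinAt

theorem continuous_jump {f : ℂ → ℂ} (hf : ∀ w : ℂ, |w.im| ≤ Real.pi → DifferentiableAt ℂ f w) :
    Continuous (fun u : ℝ => f (u + (Real.pi : ℝ) * I)) ∧
    Continuous (fun u : ℝ => f (u + ((-Real.pi : ℝ) : ℂ) * I)) := by
  constructor <;> rw [continuous_iff_continuousAt] <;> intro u
  · exact ContinuousAt.comp (f := fun u : ℝ => (u + (Real.pi : ℝ) * I : ℂ))
      (hf _ (by simp [abs_of_pos Real.pi_pos])).continuousAt (by fun_prop)
  · exact ContinuousAt.comp (f := fun u : ℝ => (u + ((-Real.pi : ℝ) : ℂ) * I : ℂ))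
      (hf _ (by simp [abs_of_pos Real.pi_pos])).continuousAt (by fun_prop)

/-- Cauchy's theorem on the rectangle between `Re w = a` and `Re w = b`: the position of the
vertical segment is immaterial. -/
theorem hairpin_eq {f : ℂ → ℂ} (hf : ∀ w : ℂ, |w.im| ≤ Real.pi → DifferentiableAt ℂ f w)
    (hJ : ∀ a, IntegrableOn (jump f) (Ioi a)) (a b : ℝ) : hairpin f a = hairpin f b := by
  have h := Complex.integral_boundary_rect_eq_zero_of_differentiableOn f ⟨a, -Real.pi⟩ ⟨b, Real.pi⟩
    (by
      intro w hw
      refine (hf w ?_).differentiableWithinAt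
      have := hw.2
      simp only [mem_preimage] at this
      rw [uIcc_of_le (by linarith [Real.pi_pos])] at this
      exact abs_le.2 this)
  simp only [smul_eq_mul] at h
  obtain ⟨c1, c2⟩ := continuous_jump hf
  have hadd := intervalIntegral.integral_interval_add_Ioi (hJ a) (hJ b)
  have hsub : ∫ u in a..b, jump f u = (∫ u in a..b, f (u + (Real.pi : ℝ) * I)) -
      ∫ u in a..b, f (u + ((-Real.pi : ℝ) : ℂ) * I) :=
    intervalIntegral.integral_sub (c1.intervalIntegrable _ _) (c2.intervalIntegrable _ _)
  unfold hairpin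
  rw [← hadd, hsub]
  linear_combination -h

/-- Collapsing the contour onto the cut, i.e. letting the vertical segment go to `-∞`: only the
limit `c` of the integrand at `-∞` and the jump survive. -/
theorem hairpin_limit {f : ℂ → ℂ} {C : ℝ} {c : ℂ}
    (hf : ∀ w : ℂ, |w.im| ≤ Real.pi → DifferentiableAt ℂ f w)
    (hJ : Integrable (jump f))
    (hC : ∀ᶠ a : ℝ in atBot, ∀ θ : ℝ, |θ| ≤ Real.pi → ‖f (a + θ * I)‖ ≤ C)
    (hc : ∀ θ : ℝ, |θ| ≤ Real.pi → Tendsto (fun a : ℝ => f (a + θ * I)) atBot (𝓝 c)) (a : ℝ) :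
    hairpin f a = 2 * Real.pi * I * c + ∫ u, jump f u := by
  have h1 : Tendsto (hairpin f) atBot
      (𝓝 (I * (∫ _θ in (-Real.pi)..Real.pi, c) + ∫ u, jump f u)) := by
    refine Tendsto.add (Tendsto.const_mul _ ?_) ?_
    · have hθ : ∀ θ : ℝ, θ ∈ uIoc (-Real.pi) Real.pi → |θ| ≤ Real.pi := by
        intro θ h
        rw [uIoc_of_le (by linarith [Real.pi_pos])] at h
        exact abs_le.2 ⟨h.1.le, h.2⟩
      refine intervalIntegral.tendsto_integral_filter_of_dominated_convergence (fun _ => C)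
        (Eventually.of_forall fun a => ?_) ?_ (by simp) ?_
      · exact ((continuous_arc hf a).mono uIoc_subset_uIcc).aestronglyMeasurable
          measurableSet_uIoc
      · filter_upwards [hC] with a ha
        exact Eventually.of_forall fun θ h => ha θ (hθ θ h)
      · exact Eventually.of_forall fun θ h => hc θ (hθ θ h)
    · exact AECover.integral_tendsto_of_countably_generated (aecover_Ioi tendsto_id) hJ
  have h2 : Tendsto (hairpin f) atBot (𝓝 (hairpin f a)) := by
    have : hairpin f = fun _ => hairpin f a :=
      funext fun b => hairpin_eq hf (fun _ => hJ.integrableOn) b a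
    rw [this]
    exact tendsto_const_nhds
  rw [tendsto_nhds_unique h2 h1]
  simp only [intervalIntegral.integral_const, sub_neg_eq_add, real_smul, ofReal_add]
  ring

/-- The integral of a derivative along the hairpin vanishes. -/
theorem hairpin_deriv {F f : ℂ → ℂ} (hF : ∀ w, HasDerivAt F (f w) w) (hf : Continuous f)
    (hJ : ∀ a, IntegrableOn (jump f) (Ioi a)) (h0 : Tendsto (jump F) atTop (𝓝 0)) (a : ℝ) :
    hairpin f a = 0 := by
  have h1 : ∀ θ : ℝ, HasDerivAt (fun θ : ℝ => F (a + θ * I)) (f (a + θ * I) * I) θ := by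
    intro θ
    have : HasDerivAt (fun θ : ℝ => (a + θ * I : ℂ)) I θ := by
      simpa using (((hasDerivAt_id θ).ofReal_comp).mul_const I).const_add (a : ℂ)
    exact (hF _).comp θ this
  have h2 : ∀ (b u : ℝ), HasDerivAt (fun u : ℝ => F (u + b * I)) (f (u + b * I)) u := by
    intro b u
    have : HasDerivAt (fun u : ℝ => (u + b * I : ℂ)) 1 u := by
      simpa using ((hasDerivAt_id u).ofReal_comp).add_const (b * I : ℂ)
    have h := (hF _).comp u this
    rw [mul_one] at h
    exact h
  have h3 : ∀ u, HasDerivAt (jump F) (jump f u) u := fun u => (h2 _ u).sub (h2 _ u)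
  have e1 := intervalIntegral.integral_eq_sub_of_hasDerivAt (a := -Real.pi) (b := Real.pi)
    (fun θ _ => h1 θ) (Continuous.intervalIntegrable (by fun_prop) _ _)
  have e2 := integral_Ioi_of_hasDerivAt_of_tendsto (a := a)
    (h3 a).continuousAt.continuousWithinAt (fun u _ => h3 u) (hJ a) h0
  rw [intervalIntegral.integral_mul_const] at e1
  unfold hairpin
  rw [e2, mul_comm, e1]
  simp [jump]

/-! ### The Gamma integral in exponential coordinates -/

/-- The substitution `r = e^u / X`, with the corresponding transfer of integrability. -/
theorem integral_exp_sub {E : Type*} [NormedAddCommGroup E] [NormedSpace ℝ E] {X : ℝ} (hX : 0 < X)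
    (g : ℝ → E) :
    (∫ r in Ioi (0 : ℝ), g r = ∫ u : ℝ, (Real.exp u / X) • g (Real.exp u / X)) ∧
    (IntegrableOn g (Ioi 0) ↔ Integrable fun u : ℝ => (Real.exp u / X) • g (Real.exp u / X)) := by
  have him : (fun u => Real.exp u / X) '' univ = Ioi 0 := by
    ext r
    simp only [image_univ, mem_range, mem_Ioi]
    constructor
    · rintro ⟨u, rfl⟩; positivity
    · intro hr
      exact ⟨Real.log (r * X), by rw [Real.exp_log (by positivity)]; field_simp⟩
  have hd : ∀ u ∈ (univ : Set ℝ),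
      HasDerivWithinAt (fun u => Real.exp u / X) (Real.exp u / X) univ u :=
    fun u _ => ((Real.hasDerivAt_exp u).div_const X).hasDerivWithinAt
  have hi : InjOn (fun u => Real.exp u / X) univ := by
    intro u _ v _ h
    have h : Real.exp u / X = Real.exp v / X := h
    exact Real.exp_injective ((div_left_inj' hX.ne').1 h)
  have ha : ∀ u, |Real.exp u / X| = Real.exp u / X := fun u => abs_of_pos (by positivity)
  constructor
  · rw [← him, integral_image_eq_integral_abs_deriv_smul MeasurableSet.univ hd hi]
    simp [ha]
  · rw [← him, integrableOn_image_iff_integrableOn_abs_deriv_smul MeasurableSet.univ hd hi]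
    simp [ha]

theorem gammaKernel {c : ℝ} (hc : 0 < c) :
    Integrable (fun u => Real.exp (-Real.exp u + c * u)) ∧
      ∫ u, Real.exp (-Real.exp u + c * u) = Real.Gamma c := by
  have key : (fun u => (Real.exp u / 1) • (Real.exp (-(Real.exp u / 1)) *
      (Real.exp u / 1) ^ (c - 1))) = fun u => Real.exp (-Real.exp u + c * u) := by
    funext u
    rw [div_one, ← Real.exp_mul, smul_eq_mul, ← Real.exp_add, ← Real.exp_add]
    ring_nf
  have h := integral_exp_sub one_pos (fun r => Real.exp (-r) * r ^ (c - 1))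
  rw [key] at h
  exact ⟨h.2.1 (Real.GammaIntegral_convergent hc), by rw [Real.Gamma_eq_integral hc, h.1]⟩

theorem gammaKernel_Ioi (c a : ℝ) :
    IntegrableOn (fun u => Real.exp (-Real.exp u + c * u)) (Ioi a) := by
  -- On `(a, ∞)` the kernel with exponent `c` is at most a multiple of the one with exponent
  -- `|c| + 1 > 0`, which is integrable on the whole line.
  have h := ((gammaKernel (c := |c| + 1) (by positivity)).1.integrableOn (s := Ioi a)).const_mul
    (Real.exp ((c - (|c| + 1)) * a))
  refine h.mono' (by fun_prop) ((ae_restrict_iff' measurableSet_Ioi).2 (Eventually.of_forall ?_))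
  intro u hu
  rw [Real.norm_of_nonneg (Real.exp_pos _).le, ← Real.exp_add]
  apply Real.exp_le_exp.2
  have h1 : c - (|c| + 1) ≤ 0 := by linarith [le_abs_self c]
  nlinarith [mul_nonneg_of_nonpos_of_nonpos h1 (sub_nonpos.2 (mem_Ioi.1 hu).le)]

theorem gammaKernel_tendsto (c : ℝ) :
    Tendsto (fun u => Real.exp (-Real.exp u + c * u)) atTop (𝓝 0) := by
  have h := (tendsto_rpow_mul_exp_neg_mul_atTop_nhds_zero c 1 one_pos).comp Real.tendsto_exp_atTop
  refine h.congr fun u => ?_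
  simp only [Function.comp]
  rw [← Real.exp_mul, ← Real.exp_add]
  ring_nf

/-! ### Hankel's formula -/

/-- Hankel's integrand `e^s s^{-z} ds` in the coordinate `s = e^w`, for real `z`. -/
noncomputable def Phi (z : ℝ) (w : ℂ) : ℂ := exp (exp w - (z - 1) * w)

theorem differentiable_Phi (z : ℝ) : Differentiable ℂ (Phi z) := by
  unfold Phi; fun_prop

theorem jump_Phi (z u : ℝ) :
    jump (Phi z) u = (Real.exp (-Real.exp u + (1 - z) * u) : ℝ) * (2 * I * Real.sin (Real.pi * z)) := by
  have e1 : exp ((u : ℂ) + (Real.pi : ℝ) * I) = -exp u := by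
    rw [exp_add, exp_pi_mul_I]; ring
  have e2 : exp ((u : ℂ) + ((-Real.pi : ℝ) : ℂ) * I) = -exp u := by
    rw [exp_add, ofReal_neg, neg_mul, exp_neg, exp_pi_mul_I]; norm_num
  unfold jump Phi
  rw [e1, e2]
  have a1 : (-exp (u : ℂ) - (z - 1) * (u + (Real.pi : ℝ) * I))
      = (-exp u + (1 - z) * u) + ((-(Real.pi * z) : ℂ) * I + Real.pi * I) := by ring
  have a2 : (-exp (u : ℂ) - (z - 1) * (u + ((-Real.pi : ℝ) : ℂ) * I))
      = (-exp u + (1 - z) * u) + ((Real.pi * z : ℂ) * I - Real.pi * I) := by push_cast; ring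
  rw [a1, a2, exp_add, exp_add (-exp u + (1 - z) * u : ℂ), exp_add (-(Real.pi * z : ℂ) * I),
    exp_sub, exp_pi_mul_I]
  push_cast
  rw [Complex.sin]
  linear_combination -(exp (-exp (u : ℂ) + (1 - z) * u)) *
    (exp (-(Real.pi * z : ℂ) * I) - exp ((Real.pi * z : ℂ) * I)) * Complex.I_sq

theorem jump_Phi_integrableOn (z a : ℝ) : IntegrableOn (jump (Phi z)) (Ioi a) := by
  have : jump (Phi z) = fun u => ((Real.exp (-Real.exp u + (1 - z) * u) : ℝ) : ℂ) *
    (2 * I * Real.sin (Real.pi * z)) := funext (jump_Phi z)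
  rw [this]
  exact ((gammaKernel_Ioi (1 - z) a).ofReal (𝕜 := ℂ)).mul_const _

theorem norm_Phi (z a θ : ℝ) :
    ‖Phi z (a + θ * I)‖ = Real.exp (Real.exp a * Real.cos θ + (1 - z) * a) := by
  unfold Phi
  rw [norm_exp]
  simp [exp_re]
  ring

/-- Hankel's formula for `z ≤ 1`, by collapsing the contour. For `z < 1` the integrand vanishes at
`-∞` and the jump integrates to `2i sin(πz) Γ(1 - z)`, which the reflection formula evaluates. For
`z = 1` the jump vanishes identically and the integrand tends to `1`. -/
theorem hairpin_Phi_lt {z : ℝ} (hz : z ≤ 1) (a : ℝ) :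
    hairpin (Phi z) a = 2 * Real.pi * I * ((1 / Real.Gamma z : ℝ) : ℂ) := by
  have hbound : ∀ᶠ a : ℝ in atBot, ∀ θ : ℝ, |θ| ≤ Real.pi →
      ‖Phi z (a + θ * I)‖ ≤ Real.exp 1 := by
    filter_upwards [eventually_le_atBot 0] with a ha θ _
    rw [norm_Phi]
    apply Real.exp_le_exp.2
    have h1 : Real.exp a * Real.cos θ ≤ 1 * 1 :=
      (mul_le_mul_of_nonneg_left (Real.cos_le_one θ) (Real.exp_pos a).le).trans
        (mul_le_mul_of_nonneg_right (Real.exp_le_one_iff.2 ha) zero_le_one)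
    nlinarith
  have hd := fun (w : ℂ) (_ : |w.im| ≤ Real.pi) => (differentiable_Phi z) w
  have hJ : jump (Phi z) = fun u => ((Real.exp (-Real.exp u + (1 - z) * u) : ℝ) : ℂ) *
    (2 * I * Real.sin (Real.pi * z)) := funext (jump_Phi z)
  rcases hz.eq_or_lt with rfl | hz
  · have hJ0 : jump (Phi 1) = fun _ => 0 := by rw [hJ]; simp
    rw [hairpin_limit (c := 1) hd (by rw [hJ0]; simp) hbound, hJ0]
    · simp
    · intro θ _
      have h1 : Tendsto (fun a : ℝ => exp (((Real.exp a : ℝ) : ℂ) * exp (θ * I))) atBot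
          (𝓝 (exp (((0 : ℝ) : ℂ) * exp (θ * I)))) :=
        (continuous_exp.tendsto _).comp
          (((continuous_ofReal.tendsto _).comp Real.tendsto_exp_atBot).mul_const _)
      simp only [ofReal_zero, zero_mul, exp_zero] at h1
      refine h1.congr fun a => ?_
      simp [Phi, exp_add]
  · have hg := gammaKernel (c := 1 - z) (by linarith)
    rw [hairpin_limit (c := 0) hd (by rw [hJ]; exact (hg.1.ofReal (𝕜 := ℂ)).mul_const _) hbound]
    · rw [hJ, integral_mul_const, integral_complex_ofReal, hg.2]
      have hr := Real.Gamma_mul_Gamma_one_sub z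
      have h1 : Real.Gamma (1 - z) ≠ 0 := (Real.Gamma_pos_of_pos (by linarith)).ne'
      have : Real.Gamma (1 - z) * Real.sin (Real.pi * z) = Real.pi * (1 / Real.Gamma z) := by
        -- If `sin πz = 0`, then `z` is a pole of `Γ`, where `Real.Gamma z = 0` by convention, and the
        -- identity still holds because `1 / 0 = 0`.
        by_cases hs : Real.sin (Real.pi * z) = 0
        · rw [hs, div_zero] at hr
          have : Real.Gamma z = 0 := by simpa [h1] using hr
          simp [hs, this]
        · have hG : Real.Gamma z ≠ 0 := by
            rintro h
            rw [h, zero_mul] at hr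
            exact div_ne_zero Real.pi_ne_zero hs hr.symm
          rw [eq_div_iff hs] at hr
          rw [mul_one_div, eq_div_iff hG]
          linarith
      have := congrArg (fun x : ℝ => (x : ℂ)) this
      simp only [ofReal_mul] at this
      linear_combination 2 * I * this
    · intro θ _
      rw [tendsto_zero_iff_norm_tendsto_zero]
      simp only [norm_Phi]
      refine Real.tendsto_exp_atBot.comp ?_
      have h1 : Tendsto (fun a : ℝ => (1 - z) * a) atBot atBot :=
        tendsto_id.const_mul_atBot (by linarith)
      exact (Real.tendsto_exp_atBot.mul_const (Real.cos θ)).add_atBot h1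

/-- Integration by parts: `Φ_{z-1} - (z-1) Φ_z` is the derivative of `Φ_z`. -/
theorem hairpin_Phi_rec (z a : ℝ) :
    hairpin (Phi (z - 1)) a = (z - 1) * hairpin (Phi z) a := by
  set f : ℂ → ℂ := fun w => Phi (z - 1) w - (z - 1) * Phi z w with hfdef
  have hF : ∀ w, HasDerivAt (Phi z) (f w) w := by
    intro w
    have h1 : HasDerivAt (fun w : ℂ => exp w - (z - 1) * w) (exp w - (z - 1) * 1) w :=
      (hasDerivAt_exp w).sub ((hasDerivAt_id w).const_mul _)
    have hfw : f w = exp (exp w - (z - 1) * w) * (exp w - (z - 1) * 1) := by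
      have : exp w - (((z - 1 : ℝ) : ℂ) - 1) * w = (exp w - (z - 1) * w) + w := by
        push_cast; ring
      simp only [f, Phi]
      rw [this, exp_add]
      ring
    rw [hfw]
    exact h1.cexp
  have c1 := (differentiable_Phi (z - 1)).continuous
  have c2 := (differentiable_Phi z).continuous
  have hJ : jump f = fun u => jump (Phi (z - 1)) u - (z - 1) * jump (Phi z) u := by
    funext u; simp only [jump, hfdef]; ring
  have i1 := jump_Phi_integrableOn (z - 1)
  have i2 := jump_Phi_integrableOn z
  have h := hairpin_deriv (f := f) hF (by fun_prop)
    (fun a => by rw [hJ]; exact (i1 a).sub ((i2 a).const_mul _))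
    (by
      have : jump (Phi z) = fun u => ((Real.exp (-Real.exp u + (1 - z) * u) : ℝ) : ℂ) *
        (2 * I * Real.sin (Real.pi * z)) := funext (jump_Phi z)
      rw [this]
      have := (((continuous_ofReal.tendsto _).comp (gammaKernel_tendsto (1 - z)))).mul_const
        (2 * I * (Real.sin (Real.pi * z) : ℂ))
      simpa using this) a
  unfold hairpin at h ⊢
  rw [hJ, integral_sub (i1 a) ((i2 a).const_mul _), integral_const_mul] at h
  have hfa : ∀ w, f w = Phi (z - 1) w - (z - 1) * Phi z w := fun _ => rfl
  simp only [hfa] at h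
  rw [intervalIntegral.integral_sub (Continuous.intervalIntegrable (by fun_prop) _ _)
    (Continuous.intervalIntegrable (by fun_prop) _ _), intervalIntegral.integral_const_mul] at h
  linear_combination h

/-- Hankel's formula for the reciprocal Gamma function, at every real `z`. -/
theorem hairpin_Phi (z a : ℝ) :
    hairpin (Phi z) a = 2 * Real.pi * I * ((1 / Real.Gamma z : ℝ) : ℂ) := by
  obtain ⟨n, hn⟩ := exists_nat_ge (z - 1)
  induction n generalizing z with
  | zero => exact hairpin_Phi_lt (by simpa using hn) a
  | succ n ih =>
    by_cases hz : z ≤ 1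
    · exact hairpin_Phi_lt hz a
    -- Here `z > 1`, so `1/Γ(z - 1) = (z - 1)/Γ(z)` is the recursion read backwards.
    have hz1 : z - 1 ≠ 0 := by intro h; apply hz; linarith
    have h := ih (z - 1) (by push_cast at hn; linarith)
    rw [hairpin_Phi_rec] at h
    have hg := Real.Gamma_add_one hz1
    rw [sub_add_cancel] at hg
    have hz2 : ((z - 1 : ℝ) : ℂ) ≠ 0 := ofReal_ne_zero.2 hz1
    apply mul_left_cancel₀ hz2
    rw [ofReal_sub, ofReal_one, h, hg]
    push_cast at hz2 ⊢
    by_cases h0 : (Real.Gamma (z - 1) : ℂ) = 0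
    · simp [h0]
    · field_simp


/-! ### The resolvent integrand and its expansion -/

/-- The integrand `e^s s^ν / (s^ν + y) ds/s` in the coordinate `s = e^w`. -/
noncomputable def resolv (ν y : ℝ) (w : ℂ) : ℂ := exp (exp w) * (exp (ν * w) / (exp (ν * w) + y))

section
variable {ν y : ℝ}

/-- `s^ν = -y` has no solution with `|arg s| ≤ π`, because `|ν arg s| < π`. -/
theorem resolv_den_ne (hν0 : 0 < ν) (hν1 : ν < 1) (hy : 0 < y) {w : ℂ} (hw : |w.im| ≤ Real.pi) :
    exp (ν * w) + y ≠ 0 := by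
  intro h
  have him : Real.exp (ν * w.re) * Real.sin (ν * w.im) = 0 := by
    have := congrArg im h
    simpa [exp_im] using this
  have hre : Real.exp (ν * w.re) * Real.cos (ν * w.im) + y = 0 := by
    have := congrArg re h
    simpa [exp_re] using this
  have hs : Real.sin (ν * w.im) = 0 := (mul_eq_zero.1 him).resolve_left (Real.exp_pos _).ne'
  have hlt : |ν * w.im| < Real.pi := by
    rw [abs_mul, abs_of_pos hν0]
    nlinarith [Real.pi_pos, abs_nonneg w.im]
  have h0 := (Real.sin_eq_zero_iff_of_lt_of_lt (abs_lt.1 hlt).1 (abs_lt.1 hlt).2).1 hs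
  rw [h0, Real.cos_zero] at hre
  linarith [Real.exp_pos (ν * w.re)]

theorem resolv_differentiableAt (hν0 : 0 < ν) (hν1 : ν < 1) (hy : 0 < y) (w : ℂ)
    (hw : |w.im| ≤ Real.pi) : DifferentiableAt ℂ (resolv ν y) w := by
  have := resolv_den_ne hν0 hν1 hy hw
  unfold resolv
  fun_prop (disch := assumption)

theorem sin_pos' (hν0 : 0 < ν) (hν1 : ν < 1) : 0 < Real.sin (ν * Real.pi) :=
  Real.sin_pos_of_pos_of_lt_pi (by positivity) (by nlinarith [Real.pi_pos])

/-- The denominator is `(q + y cos νπ)² + y² sin² νπ`. -/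
theorem den_ge (ν y q : ℝ) : y ^ 2 * Real.sin (ν * Real.pi) ^ 2 ≤
    q ^ 2 + 2 * q * y * Real.cos (ν * Real.pi) + y ^ 2 := by
  have h1 := Real.sin_sq_add_cos_sq (ν * Real.pi)
  have h2 : q ^ 2 + 2 * q * y * Real.cos (ν * Real.pi) + y ^ 2 -
    y ^ 2 * Real.sin (ν * Real.pi) ^ 2 = (q + y * Real.cos (ν * Real.pi)) ^ 2 := by
    linear_combination (-y ^ 2) * h1
  nlinarith [sq_nonneg (q + y * Real.cos (ν * Real.pi))]

/-- The integrand of the Lamperti-type mixture in the variable `r = e^u` (with `du = dr/r`), for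
general `y` in place of `1`. -/
noncomputable def dens (ν y u : ℝ) : ℝ :=
  y * Real.exp (-Real.exp u + ν * u) /
    (Real.exp (ν * u) ^ 2 + 2 * Real.exp (ν * u) * y * Real.cos (ν * Real.pi) + y ^ 2)

theorem jump_resolv (hν0 : 0 < ν) (hν1 : ν < 1) (hy : 0 < y) (u : ℝ) :
    jump (resolv ν y) u = (dens ν y u : ℂ) * (2 * I * Real.sin (ν * Real.pi)) := by
  have d1 := resolv_den_ne hν0 hν1 hy (w := u + (Real.pi : ℝ) * I)
    (by simp [abs_of_pos Real.pi_pos])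
  have d2 := resolv_den_ne hν0 hν1 hy (w := u + ((-Real.pi : ℝ) : ℂ) * I)
    (by simp [abs_of_pos Real.pi_pos])
  have e1 : exp ((u : ℂ) + (Real.pi : ℝ) * I) = -exp u := by
    rw [exp_add, exp_pi_mul_I]; ring
  have e2 : exp ((u : ℂ) + ((-Real.pi : ℝ) : ℂ) * I) = -exp u := by
    rw [exp_add, ofReal_neg, neg_mul, exp_neg, exp_pi_mul_I]; norm_num
  have g1 : exp (ν * ((u : ℂ) + (Real.pi : ℝ) * I)) = exp (ν * u) *
      (Complex.cos (ν * Real.pi) + Complex.sin (ν * Real.pi) * I) := by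
    rw [← exp_mul_I, ← exp_add]; ring_nf
  have g2 : exp (ν * ((u : ℂ) + ((-Real.pi : ℝ) : ℂ) * I)) = exp (ν * u) *
      (Complex.cos (ν * Real.pi) - Complex.sin (ν * Real.pi) * I) := by
    have : Complex.cos (ν * Real.pi) - Complex.sin (ν * Real.pi) * I =
      Complex.cos (-(ν * Real.pi)) + Complex.sin (-(ν * Real.pi)) * I := by
      rw [Complex.cos_neg, Complex.sin_neg]; ring
    rw [this, ← exp_mul_I, ← exp_add]; push_cast; ring_nf
  have hden : (Real.exp (ν * u) ^ 2 + 2 * Real.exp (ν * u) * y * Real.cos (ν * Real.pi) + y ^ 2 : ℝ)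
      ≠ 0 := by
    have := den_ge ν y (Real.exp (ν * u))
    have h2 : 0 < y ^ 2 * Real.sin (ν * Real.pi) ^ 2 := by
      have := sin_pos' hν0 hν1
      positivity
    linarith
  have hden' := ofReal_ne_zero.2 hden
  have hE : exp (-exp (u : ℂ) + ν * u) = exp (-exp (u : ℂ)) * exp (ν * u) := exp_add _ _
  have hsc := Complex.sin_sq_add_cos_sq (ν * Real.pi : ℂ)
  unfold jump resolv dens
  rw [g1] at d1
  rw [g2] at d2
  rw [e1, e2, g1, g2]
  push_cast at hden' ⊢
  rw [hE]
  generalize exp (ν * u : ℂ) = q at *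
  generalize exp (-exp (u : ℂ)) = E at *
  generalize Complex.cos (ν * Real.pi : ℂ) = c at *
  generalize Complex.sin (ν * Real.pi : ℂ) = s at *
  have hprod : q ^ 2 + 2 * q * y * c + y ^ 2 = (q * (c + s * I) + y) * (q * (c - s * I) + y) := by
    linear_combination (-q ^ 2) * hsc + q ^ 2 * s ^ 2 * I_sq
  rw [hprod]
  field_simp
  ring

theorem dens_integrable (hν0 : 0 < ν) (hν1 : ν < 1) (hy : 0 < y) : Integrable (dens ν y) := by
  have hs := sin_pos' hν0 hν1
  have hpos : 0 < y ^ 2 * Real.sin (ν * Real.pi) ^ 2 := by positivity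
  refine (((gammaKernel hν0).1.const_mul y).div_const
    (y ^ 2 * Real.sin (ν * Real.pi) ^ 2)).mono' ?_ (Eventually.of_forall fun u => ?_)
  · exact Measurable.aestronglyMeasurable (by unfold dens; fun_prop)
  · have := den_ge ν y (Real.exp (ν * u))
    rw [Real.norm_of_nonneg (by unfold dens; have := hpos.trans_le this; positivity)]
    unfold dens
    gcongr

theorem norm_exp_mul (ν a θ : ℝ) : ‖exp (ν * (a + θ * I))‖ = Real.exp (ν * a) := by
  rw [norm_exp]; simp

theorem norm_exp_exp (a θ : ℝ) : ‖exp (exp (a + θ * I))‖ ≤ Real.exp (Real.exp a) := by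
  rw [norm_exp]
  apply Real.exp_le_exp.2
  refine (re_le_norm _).trans ?_
  rw [norm_exp]; simp

/-- Collapsing the contour for the resolvent integrand: nothing is left at `-∞`, and the jump is the
Lamperti-type density. -/
theorem hairpin_resolv_eq (hν0 : 0 < ν) (hν1 : ν < 1) (hy : 0 < y) (a : ℝ) :
    hairpin (resolv ν y) a =
      ((∫ u, dens ν y u : ℝ) : ℂ) * (2 * I * Real.sin (ν * Real.pi)) := by
  have hJ : jump (resolv ν y) = fun u => (dens ν y u : ℂ) * (2 * I * Real.sin (ν * Real.pi)) :=
    funext (jump_resolv hν0 hν1 hy)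
  have hexp : Tendsto (fun a : ℝ => Real.exp (ν * a)) atBot (𝓝 0) :=
    Real.tendsto_exp_atBot.comp (tendsto_id.const_mul_atBot hν0)
  -- As soon as `e^{νa} < y/2`, the denominator is at least `y/2` in modulus.
  have hb : ∀ᶠ a : ℝ in atBot, ∀ θ : ℝ,
      ‖resolv ν y (a + θ * I)‖ ≤ Real.exp 1 * (Real.exp (ν * a) / (y / 2)) := by
    filter_upwards [eventually_le_atBot 0, hexp.eventually_lt_const (half_pos hy)] with a ha hay θ
    unfold resolv
    rw [norm_mul, norm_div, norm_exp_mul]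
    have h1 : ‖exp (exp (a + θ * I))‖ ≤ Real.exp 1 :=
      (norm_exp_exp a θ).trans (Real.exp_le_exp.2 (Real.exp_le_one_iff.2 ha))
    have h2 : y / 2 ≤ ‖exp (ν * (a + θ * I)) + y‖ := by
      have := norm_sub_norm_le (y : ℂ) (-exp (ν * (a + θ * I)))
      rw [norm_neg, norm_exp_mul, norm_real, Real.norm_of_nonneg hy.le, sub_neg_eq_add,
        add_comm (y : ℂ)] at this
      linarith
    gcongr
  rw [hairpin_limit (C := Real.exp 1) (c := 0) (resolv_differentiableAt hν0 hν1 hy), hJ,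
    integral_mul_const, integral_complex_ofReal]
  · ring
  · rw [hJ]; exact ((dens_integrable hν0 hν1 hy).ofReal (𝕜 := ℂ)).mul_const _
  · filter_upwards [hb, hexp.eventually_lt_const (half_pos hy)] with a ha hay θ _
    refine (ha θ).trans (mul_le_of_le_one_right (Real.exp_pos _).le ?_)
    exact (div_le_one (half_pos hy)).2 hay.le
  · intro θ _
    apply squeeze_zero_norm' (hb.mono fun a ha => ha θ)
    simpa using (hexp.div_const (y / 2)).const_mul (Real.exp 1)

theorem Phi_eq (ν : ℝ) (k : ℕ) (w : ℂ) :
    Phi (ν * k + 1) w = exp (exp w) * (exp (ν * w))⁻¹ ^ k := by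
  unfold Phi
  rw [← exp_neg, ← exp_nat_mul, ← exp_add]
  congr 1
  push_cast; ring

/-- The geometric expansion `s^ν / (s^ν + y) = ∑ (-y)^k s^{-νk}`, valid for `|s|^ν > y`. -/
theorem hasSum_resolv {w : ℂ} (hw : y < ‖exp (ν * w)‖) (hy : 0 < y) :
    HasSum (fun k : ℕ => (-y : ℂ) ^ k * Phi (ν * k + 1) w) (resolv ν y w) := by
  have h0 : exp (ν * w) ≠ 0 := exp_ne_zero _
  have hr : ‖(-y : ℂ) * (exp (ν * w))⁻¹‖ < 1 := by
    rw [norm_mul, norm_inv, norm_neg, norm_real, Real.norm_of_nonneg hy.le, ← div_eq_mul_inv]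
    exact (div_lt_one (hy.trans hw)).2 hw
  have h := (hasSum_geometric_of_norm_lt_one hr).mul_left (exp (exp w))
  have hne : exp (ν * w) + y ≠ 0 := by
    intro h
    have := congrArg norm (eq_neg_of_add_eq_zero_left h)
    rw [norm_neg, norm_real, Real.norm_of_nonneg hy.le] at this
    linarith
  have e : resolv ν y w = exp (exp w) * (1 - -(y : ℂ) * (exp (ν * w))⁻¹)⁻¹ := by
    unfold resolv
    congr 1
    rw [neg_mul, sub_neg_eq_add, div_eq_iff hne, eq_comm, inv_mul_eq_iff_eq_mul₀]
    · field_simp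
    · intro h'
      apply hne
      field_simp at h'
      simpa using h'
  have ef : (fun k : ℕ => (-y : ℂ) ^ k * Phi (ν * k + 1) w) =
      fun k : ℕ => exp (exp w) * (-(y : ℂ) * (exp (ν * w))⁻¹) ^ k := by
    funext k
    rw [Phi_eq, mul_left_comm, ← mul_pow]
  rw [e, ef]
  exact h

/-- Termwise integration of the geometric expansion, along a hairpin which stays in `|s|^ν > y`. -/
theorem hairpin_hasSum (hν0 : 0 < ν) (hy : 0 < y) {a : ℝ}
    (ha : y < Real.exp (ν * a)) :
    HasSum (fun k : ℕ => (-y : ℂ) ^ k * hairpin (Phi (ν * k + 1)) a) (hairpin (resolv ν y) a) := by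
  set ρ := y / Real.exp (ν * a) with hρ
  have hρ0 : 0 ≤ ρ := by positivity
  have hρ1 : ρ < 1 := (div_lt_one (Real.exp_pos _)).2 ha
  have hgeo := summable_geometric_of_lt_one hρ0 hρ1
  have hnorm : ∀ (k : ℕ) (u θ : ℝ), a ≤ u →
      ‖(-y : ℂ) ^ k * Phi (ν * k + 1) (u + θ * I)‖ ≤ ‖exp (exp (u + θ * I))‖ * ρ ^ k := by
    intro k u θ hu
    rw [Phi_eq, norm_mul, norm_mul, norm_pow, norm_pow, norm_inv, norm_neg, norm_real,
      norm_exp_mul, Real.norm_of_nonneg hy.le, mul_left_comm, ← mul_pow, ← div_eq_mul_inv]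
    have : y / Real.exp (ν * u) ≤ ρ := by
      rw [hρ]
      gcongr
    gcongr
  have h1 : HasSum (fun k : ℕ => ∫ θ in (-Real.pi)..Real.pi,
      (-y : ℂ) ^ k * Phi (ν * k + 1) (a + θ * I))
      (∫ θ in (-Real.pi)..Real.pi, resolv ν y (a + θ * I)) := by
    refine intervalIntegral.hasSum_integral_of_dominated_convergence
      (fun k _ => Real.exp (Real.exp a) * ρ ^ k) (fun k => ?_) (fun k => ?_) ?_ ?_ ?_
    · have := (differentiable_Phi (ν * k + 1)).continuous
      exact Continuous.aestronglyMeasurable (by fun_prop)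
    · refine Eventually.of_forall fun θ _ => (hnorm k a θ le_rfl).trans ?_
      gcongr
      exact norm_exp_exp a θ
    · exact Eventually.of_forall fun θ _ => hgeo.mul_left _
    · simp
    · exact Eventually.of_forall fun θ _ => hasSum_resolv (by rwa [norm_exp_mul]) hy
  have hray : ∀ (b u : ℝ), exp ((b : ℂ) * I) = -1 →
      ‖exp (exp (u + b * I))‖ = Real.exp (-Real.exp u) := by
    intro b u hb
    rw [exp_add, hb, norm_exp]
    simp [exp_ofReal_re]
  have hb1 : exp (((Real.pi : ℝ) : ℂ) * I) = -1 := exp_pi_mul_I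
  have hb2 : exp (((-Real.pi : ℝ) : ℂ) * I) = -1 := by
    rw [ofReal_neg, neg_mul, exp_neg, exp_pi_mul_I]; norm_num
  have hjn : ∀ (k : ℕ) (u : ℝ), a ≤ u →
      ‖(-y : ℂ) ^ k * jump (Phi (ν * k + 1)) u‖ ≤ 2 * Real.exp (-Real.exp u) * ρ ^ k := by
    intro k u hu
    have n1 := hnorm k u Real.pi hu
    have n2 := hnorm k u (-Real.pi) hu
    rw [hray _ _ hb1] at n1
    rw [hray _ _ hb2] at n2
    unfold jump
    rw [mul_sub]
    refine (norm_sub_le _ _).trans ?_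
    linarith
  have hE : IntegrableOn (fun u => Real.exp (-Real.exp u)) (Ioi a) := by
    simpa using gammaKernel_Ioi 0 a
  have hI : ∀ k : ℕ, IntegrableOn (fun u => (-y : ℂ) ^ k * jump (Phi (ν * k + 1)) u) (Ioi a) :=
    fun k => (jump_Phi_integrableOn _ a).const_mul _
  have h2 : HasSum (fun k : ℕ => ∫ u in Ioi a, (-y : ℂ) ^ k * jump (Phi (ν * k + 1)) u)
      (∫ u in Ioi a, jump (resolv ν y) u) := by
    have h := hasSum_integral_of_summable_integral_norm hI (by
      refine Summable.of_nonneg_of_le (fun k => integral_nonneg fun u => norm_nonneg _)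
        (fun k => ?_) (hgeo.mul_left (∫ u in Ioi a, 2 * Real.exp (-Real.exp u)))
      rw [← integral_mul_const]
      exact setIntegral_mono_on (hI k).norm ((hE.const_mul 2).mul_const _) measurableSet_Ioi
        fun u hu => hjn k u (mem_Ioi.1 hu).le)
    have e : ∫ u in Ioi a, ∑' k : ℕ, (-y : ℂ) ^ k * jump (Phi (ν * k + 1)) u =
        ∫ u in Ioi a, jump (resolv ν y) u := by
      refine setIntegral_congr_fun measurableSet_Ioi fun u hu => ?_
      have hu : a < u := hu
      have hlt : y < Real.exp (ν * u) :=
        ha.trans_le (Real.exp_le_exp.2 (mul_le_mul_of_nonneg_left hu.le hν0.le))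
      have s := (hasSum_resolv (ν := ν) (y := y) (w := u + (Real.pi : ℝ) * I)
        (by rwa [norm_exp_mul]) hy).sub (hasSum_resolv (ν := ν) (y := y)
          (w := u + ((-Real.pi : ℝ) : ℂ) * I) (by rwa [norm_exp_mul]) hy)
      simp only [← mul_sub] at s
      exact s.tsum_eq
    rwa [e] at h
  have ef : (fun k : ℕ => (-y : ℂ) ^ k * hairpin (Phi (ν * k + 1)) a) = fun k : ℕ =>
      I * (∫ θ in (-Real.pi)..Real.pi, (-y : ℂ) ^ k * Phi (ν * k + 1) (a + θ * I)) +
        ∫ u in Ioi a, (-y : ℂ) ^ k * jump (Phi (ν * k + 1)) u := by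
    funext k
    rw [intervalIntegral.integral_const_mul, integral_const_mul]
    unfold hairpin
    ring
  rw [ef]
  exact (h1.mul_left I).add h2

end

theorem mittagLeffler_eq {ν y : ℝ} (hν0 : 0 < ν) (hν1 : ν < 1) (hy : 0 < y) :
    mittagLeffler ν 1 (-y) = Real.sin (ν * Real.pi) / Real.pi * ∫ u, dens ν y u := by
  -- A segment far enough to the right: at `a = (log y + 1)/ν` one has `e^{νa} = e y`.
  have ha : y < Real.exp (ν * ((Real.log y + 1) / ν)) := by
    rw [mul_div_cancel₀ _ hν0.ne', Real.exp_add, Real.exp_log hy]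
    nlinarith [Real.add_one_lt_exp one_ne_zero]
  have h := hairpin_hasSum hν0 hy ha
  rw [hairpin_resolv_eq hν0 hν1 hy] at h
  simp only [hairpin_Phi] at h
  have hpi : (Real.pi : ℂ) ≠ 0 := ofReal_ne_zero.2 Real.pi_ne_zero
  have h' := h.div_const (2 * Real.pi * I)
  have h2 : HasSum (fun k : ℕ => (((-y) ^ k / Real.Gamma (ν * k + 1) : ℝ) : ℂ))
      ((Real.sin (ν * Real.pi) / Real.pi * ∫ u, dens ν y u : ℝ) : ℂ) := by
    have hI := I_ne_zero
    have e1 : (fun k : ℕ => (((-y) ^ k / Real.Gamma (ν * k + 1) : ℝ) : ℂ)) = fun k : ℕ =>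
        (-y : ℂ) ^ k * (2 * Real.pi * I * ((1 / Real.Gamma (ν * k + 1) : ℝ) : ℂ)) /
          (2 * Real.pi * I) := by
      funext k
      push_cast
      field_simp
    have e2 : ((Real.sin (ν * Real.pi) / Real.pi * ∫ u, dens ν y u : ℝ) : ℂ) =
        ((∫ u, dens ν y u : ℝ) : ℂ) * (2 * I * (Real.sin (ν * Real.pi) : ℝ)) /
          (2 * Real.pi * I) := by
      rw [ofReal_mul, ofReal_div]
      field_simp
    rw [e1, e2]
    exact h'
  exact (Complex.hasSum_ofReal.1 h2).tsum_eq

end Hairpin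

/-- Integral representation of the Mittag--Leffler function:
`E_{ν,1}(−ζ t^ν) = (sin νπ/π) ∫_0^∞ r^{ν−1} e^{−r ζ^{1/ν} t}/(r^{2ν}+2r^ν cos νπ+1) dr`. -/
theorem mittagLeffler_integral_repr (ν ζ t : ℝ) (hν0 : 0 < ν) (hν1 : ν < 1)
    (hζ : 0 < ζ) (ht : 0 < t) :
    mittagLeffler ν 1 (-ζ * t ^ ν)
      = (Real.sin (ν * Real.pi) / Real.pi) *
          ∫ r in Set.Ioi (0 : ℝ),
            r ^ (ν - 1) * Real.exp (-r * ζ ^ (1 / ν) * t) /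
              (r ^ (2 * ν) + 2 * r ^ ν * Real.cos (ν * Real.pi) + 1) := by
  -- With `X^ν = ζ t^ν`, the substitution `r = e^u / X` removes `ζ` and `t` from the exponential.
  set X := ζ ^ (1 / ν) * t with hX
  have hX0 : 0 < X := by positivity
  have hXν : X ^ ν = ζ * t ^ ν := by
    rw [hX, Real.mul_rpow (by positivity) ht.le, ← Real.rpow_mul hζ.le,
      one_div_mul_cancel hν0.ne', Real.rpow_one]
  have hy : 0 < X ^ ν := by positivity
  rw [neg_mul, ← hXν, Hairpin.mittagLeffler_eq hν0 hν1 hy, (Hairpin.integral_exp_sub hX0 _).1]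
  congr 2
  funext u
  have hr : 0 < Real.exp u / X := by positivity
  have h1 : (Real.exp u / X) ^ ν = Real.exp (ν * u) / X ^ ν := by
    rw [Real.div_rpow (Real.exp_pos u).le hX0.le, ← Real.exp_mul, mul_comm]
  have h2 : (Real.exp u / X) ^ (2 * ν) = (Real.exp (ν * u) / X ^ ν) ^ 2 := by
    rw [mul_comm, Real.rpow_mul hr.le, h1, Real.rpow_two]
  have h3 : -(Real.exp u / X) * ζ ^ (1 / ν) * t = -Real.exp u := by
    rw [mul_assoc, ← hX]; field_simp
  rw [smul_eq_mul, h2, h3, Real.rpow_sub_one hr.ne', h1, Hairpin.dens, Real.exp_add]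
  have hd : Real.exp (ν * u) ^ 2 + 2 * Real.exp (ν * u) * X ^ ν * Real.cos (ν * Real.pi) +
      (X ^ ν) ^ 2 = (X ^ ν) ^ 2 * ((Real.exp (ν * u) / X ^ ν) ^ 2 +
        2 * (Real.exp (ν * u) / X ^ ν) * Real.cos (ν * Real.pi) + 1) := by
    field_simp
  rw [hd]
  have := Real.exp_ne_zero u
  field_simp
end

section
/- Let 0 < ν ≤ 1, let λ_1, λ_2 be distinct positive reals, and let t > 0. Then ∫_0^t λ_1 s^{ν−1} E_{ν,ν}(−λ_1 s^ν) · λ_2 (t−s)^{ν−1} E_{ν,ν}(−λ_2 (t−s)^ν) ds = (λ_1 λ_2/(λ_2 − λ_1)) · t^{ν−1} · ( E_{ν,ν}(−λ_1 t^ν) − E_{ν,ν}(−λ_2 t^ν) ), where E_{ν,ν}(x) = ∑_{h=0}^∞ x^h/Γ(νh+ν). -/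
open MeasureTheory
open Set (Ioo Ioi Ioi_subset_Ioi)

/-- `Γ(x + 1) = ∫₀^∞ e^{-u} u ^ x du` is at least its part over `u > R`, where `u ^ x ≥ R ^ x`.
Since `R` is arbitrary, this gives faster than exponential growth. -/
lemma rpow_mul_exp_neg_le_Gamma {x R : ℝ} (hx : 0 < x) (hR : 0 < R) :
    R ^ x * Real.exp (-R) ≤ Real.Gamma (x + 1) := by
  have hint := Real.GammaIntegral_convergent (s := x + 1) (by linarith)
  have hexp : IntegrableOn (fun u : ℝ => Real.exp (-u)) (Ioi R) := by
    simpa using integrableOn_exp_mul_Ioi (a := -1) (by norm_num) R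
  rw [Real.Gamma_eq_integral (by linarith), ← integral_exp_neg_Ioi R, ← integral_const_mul]
  refine (setIntegral_mono_on (hexp.const_mul _) (hint.mono_set (Ioi_subset_Ioi hR.le))
    measurableSet_Ioi fun u hu => ?_).trans
    (setIntegral_mono_set hint ?_ (Ioi_subset_Ioi hR.le).eventuallyLE)
  · have hu' : R < u := hu
    rw [mul_comm, add_sub_cancel_right]
    gcongr
  · refine (ae_restrict_iff' measurableSet_Ioi).2 (ae_of_all _ fun u hu => ?_)
    have hu' : (0 : ℝ) < u := hu
    show (0 : ℝ) ≤ _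
    positivity

/-- Geometric domination of the Mittag-Leffler coefficients, uniformly in `n`. The ratio `1 / 2` is
convenient because `2 ^ (-(j + k))` is summable over pairs `(j, k)`. -/
lemma pow_div_Gamma_le {ν β c : ℝ} (hν : 0 < ν) (hβ : 0 < β) (hc : 0 < c) :
    ∃ C : ℝ, 0 < C ∧ ∀ n : ℕ, c ^ n / Real.Gamma (ν * n + β) ≤ C * (1 / 2) ^ n := by
  -- `R ^ ν = 4 c`: one factor `2` gives the decay, the other absorbs the factor `ν n + β`.
  obtain ⟨R, hR, hRν⟩ : ∃ R : ℝ, 0 < R ∧ R ^ ν = 4 * c :=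
    ⟨(4 * c) ^ ν⁻¹, by positivity, Real.rpow_inv_rpow (by positivity) hν.ne'⟩
  refine ⟨(ν + β) * Real.exp R * R ^ (-β), by positivity, fun n => ?_⟩
  have hx : 0 < ν * n + β := by positivity
  have hG := rpow_mul_exp_neg_le_Gamma hx hR
  rw [Real.Gamma_add_one hx.ne', Real.rpow_add hR, Real.rpow_mul hR.le, hRν, Real.rpow_natCast,
    mul_pow, Real.exp_neg] at hG
  have hGpos := Real.Gamma_pos_of_pos hx
  have hlin : ν * n + β ≤ (ν + β) * 2 ^ n := by
    have h1 : (n : ℝ) ≤ 2 ^ n := by exact_mod_cast (Nat.lt_two_pow_self (n := n)).le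
    have h2 : (1 : ℝ) ≤ 2 ^ n := one_le_pow₀ (by norm_num)
    nlinarith
  have h4 : (4 : ℝ) ^ n = 2 ^ n * 2 ^ n := by rw [← mul_pow]; norm_num
  rw [h4] at hG
  rw [Real.rpow_neg hR.le, div_le_iff₀ hGpos, one_div, inv_pow]
  set G := Real.Gamma (ν * n + β)
  have hB : 0 < R ^ β := by positivity
  have hE := Real.exp_pos R
  have h2n : (0 : ℝ) < 2 ^ n := by positivity
  have h3 : 2 ^ n * 2 ^ n * c ^ n * R ^ β ≤ (ν + β) * 2 ^ n * G * Real.exp R := by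
    rw [← div_eq_mul_inv, div_le_iff₀ hE] at hG
    refine hG.trans ?_
    gcongr
  have h5 : 2 ^ n * c ^ n * R ^ β ≤ (ν + β) * G * Real.exp R :=
    le_of_mul_le_mul_left (by linarith) h2n
  calc c ^ n = (2 ^ n * c ^ n * R ^ β) * ((R ^ β)⁻¹ * (2 ^ n)⁻¹) := by field_simp
    _ ≤ ((ν + β) * G * Real.exp R) * ((R ^ β)⁻¹ * (2 ^ n)⁻¹) := by gcongr
    _ = _ := by ring

lemma summable_norm_mittagLeffler {ν β : ℝ} (hν : 0 < ν) (hβ : 0 < β) (x : ℝ) :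
    Summable fun h : ℕ => ‖x ^ h / Real.Gamma (ν * h + β)‖ := by
  obtain ⟨C, -, hC⟩ := pow_div_Gamma_le hν hβ (c := |x| + 1) (by positivity)
  refine Summable.of_nonneg_of_le (fun _ => norm_nonneg _) (fun n => ?_)
    (summable_geometric_two.mul_left C)
  have hG : 0 < Real.Gamma (ν * n + β) := Real.Gamma_pos_of_pos (by positivity)
  refine le_trans ?_ (hC n)
  rw [norm_div, norm_pow, Real.norm_eq_abs, Real.norm_of_nonneg hG.le]
  gcongr
  linarith

/-- The real Beta integral over `(0, t)`. -/
lemma integral_rpow_mul_sub_rpow {a b t : ℝ} (ha : 0 < a) (hb : 0 < b) (ht : 0 < t) :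
    ∫ s in Ioo 0 t, s ^ (a - 1) * (t - s) ^ (b - 1) =
      t ^ (a + b - 1) * (Real.Gamma a * Real.Gamma b / Real.Gamma (a + b)) := by
  have h := Complex.betaIntegral_scaled a b ht
  have hG := Complex.Gamma_mul_Gamma_eq_betaIntegral (s := a) (t := b) (by simpa) (by simpa)
  have hne : Real.Gamma (a + b) ≠ 0 := (Real.Gamma_pos_of_pos (by linarith)).ne'
  have hne' : (Real.Gamma (a + b) : ℂ) ≠ 0 := by exact_mod_cast hne
  rw [← Complex.ofReal_add, Complex.Gamma_ofReal, Complex.Gamma_ofReal, Complex.Gamma_ofReal] at hG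
  have hB : Complex.betaIntegral a b =
      ((Real.Gamma a * Real.Gamma b / Real.Gamma (a + b) : ℝ) : ℂ) := by
    push_cast
    rw [hG, mul_div_cancel_left₀ _ hne']
  rw [hB, intervalIntegral.integral_of_le ht.le, integral_Ioc_eq_integral_Ioo] at h
  apply Complex.ofReal_injective
  rw [← integral_complex_ofReal, Complex.ofReal_mul, Complex.ofReal_cpow ht.le]
  push_cast at h ⊢
  rw [← h]
  refine setIntegral_congr_fun measurableSet_Ioo fun s hs => ?_
  rw [Complex.ofReal_cpow hs.1.le, Complex.ofReal_cpow (sub_pos.2 hs.2).le]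
  push_cast
  rfl

lemma integrableOn_rpow_mul_sub_rpow {a b t : ℝ} (ha : 0 < a) (hb : 0 < b) (ht : 0 < t) :
    IntegrableOn (fun s => s ^ (a - 1) * (t - s) ^ (b - 1)) (Ioo 0 t) := by
  -- A function that is not integrable has integral `0`, but the Beta integral is positive.
  by_contra h
  have h0 := integral_undef h
  rw [integral_rpow_mul_sub_rpow ha hb ht] at h0
  have := Real.Gamma_pos_of_pos ha
  have := Real.Gamma_pos_of_pos hb
  have := Real.Gamma_pos_of_pos (add_pos ha hb)
  exact absurd h0 (by positivity)

lemma sub_mul_sum_antidiagonal (a b : ℝ) (n : ℕ) :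
    (a - b) * ∑ p ∈ Finset.HasAntidiagonal.antidiagonal n, a ^ p.1 * b ^ p.2 = a ^ (n + 1) - b ^ (n + 1) := by
  rw [Finset.Nat.sum_antidiagonal_eq_sum_range_succ (fun i j => a ^ i * b ^ j), mul_comm,
    ← (Commute.all a b).geom_sum₂_mul (n + 1)]
  simp

/-- The coefficient `t ^ (ν n + 2ν - 1) / Γ(ν n + 2ν)` shared by all terms with `j + k = n`. -/
noncomputable def convCoeff (ν t : ℝ) (n : ℕ) : ℝ :=
  t ^ (ν * n + 2 * ν - 1) / Real.Gamma (ν * n + 2 * ν)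

/-- The term of index `(j, k)` in the double series expansion of the integrand. -/
noncomputable def convTerm (ν l1 l2 t : ℝ) (p : ℕ × ℕ) (s : ℝ) : ℝ :=
  l1 * l2 * ((-l1) ^ p.1 * (-l2) ^ p.2) /
      (Real.Gamma (ν * p.1 + ν) * Real.Gamma (ν * p.2 + ν)) *
    (s ^ (ν * p.1 + ν - 1) * (t - s) ^ (ν * p.2 + ν - 1))

lemma integrableOn_convTerm {ν t : ℝ} (l1 l2 : ℝ) (hν : 0 < ν) (ht : 0 < t) (p : ℕ × ℕ) :
    IntegrableOn (convTerm ν l1 l2 t p) (Ioo 0 t) :=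
  (integrableOn_rpow_mul_sub_rpow (a := ν * p.1 + ν) (b := ν * p.2 + ν) (by positivity)
    (by positivity) ht).const_mul _

lemma integral_convTerm {ν t : ℝ} (l1 l2 : ℝ) (hν : 0 < ν) (ht : 0 < t) (p : ℕ × ℕ) :
    ∫ s in Ioo 0 t, convTerm ν l1 l2 t p s =
      l1 * l2 * ((-l1) ^ p.1 * (-l2) ^ p.2) * convCoeff ν t (p.1 + p.2) := by
  have ha : 0 < ν * p.1 + ν := by positivity
  have hb : 0 < ν * p.2 + ν := by positivity
  have h1 := (Real.Gamma_pos_of_pos ha).ne'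
  have h2 := (Real.Gamma_pos_of_pos hb).ne'
  simp only [convTerm, convCoeff]
  rw [integral_const_mul, integral_rpow_mul_sub_rpow ha hb ht]
  have e : ν * p.1 + ν + (ν * p.2 + ν) = ν * ((p.1 + p.2 : ℕ) : ℝ) + 2 * ν := by
    push_cast; ring
  rw [e]
  field_simp

/-- On `(0, t)` the sign of a term is `(-1) ^ (j + k)`, so integrals of norms are again Beta
integrals. -/
lemma norm_convTerm {ν l1 l2 t s : ℝ} (hν : 0 < ν) (h1 : 0 < l1) (h2 : 0 < l2) (hs : s ∈ Ioo 0 t)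
    (p : ℕ × ℕ) :
    ‖convTerm ν l1 l2 t p s‖ = (-1) ^ (p.1 + p.2) * convTerm ν l1 l2 t p s := by
  have hG1 : 0 < Real.Gamma (ν * p.1 + ν) := Real.Gamma_pos_of_pos (by positivity)
  have hG2 : 0 < Real.Gamma (ν * p.2 + ν) := Real.Gamma_pos_of_pos (by positivity)
  have hs0 : 0 < s := hs.1
  have hs1 : 0 < t - s := sub_pos.2 hs.2
  have hsign : ((-1 : ℝ) ^ (p.1 + p.2)) * ((-1) ^ p.1 * (-1) ^ p.2) = 1 := by
    rw [← pow_add, ← mul_pow]; norm_num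
  have key : convTerm ν l1 l2 t p s = (-1) ^ p.1 * (-1) ^ p.2 *
      (l1 * l2 * (l1 ^ p.1 * l2 ^ p.2) /
        (Real.Gamma (ν * p.1 + ν) * Real.Gamma (ν * p.2 + ν)) *
      (s ^ (ν * p.1 + ν - 1) * (t - s) ^ (ν * p.2 + ν - 1))) := by
    rw [convTerm, neg_pow l1, neg_pow l2]; ring
  rw [key, ← mul_assoc ((-1 : ℝ) ^ (p.1 + p.2)), hsign, one_mul, norm_mul, norm_mul, norm_pow,
    norm_pow]
  simp only [norm_neg, norm_one, one_pow, one_mul]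
  exact Real.norm_of_nonneg (by positivity)

lemma summable_integral_norm_convTerm {ν l1 l2 t : ℝ} (hν : 0 < ν) (h1 : 0 < l1) (h2 : 0 < l2)
    (ht : 0 < t) : Summable fun p : ℕ × ℕ => ∫ s in Ioo 0 t, ‖convTerm ν l1 l2 t p s‖ := by
  obtain ⟨C, hC0, hC⟩ := pow_div_Gamma_le (β := 2 * ν) (c := (l1 + l2) * t ^ ν) hν
    (by positivity) (by positivity)
  have hgeo : Summable fun p : ℕ × ℕ => ((1 : ℝ) / 2) ^ p.1 * (1 / 2) ^ p.2 :=
    summable_geometric_two.mul_of_nonneg summable_geometric_two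
      (fun _ => by positivity) (fun _ => by positivity)
  refine Summable.of_nonneg_of_le (fun p => integral_nonneg fun _ => norm_nonneg _) (fun p => ?_)
    (hgeo.mul_left (l1 * l2 * t ^ (2 * ν - 1) * C))
  rw [setIntegral_congr_fun measurableSet_Ioo (fun s hs => norm_convTerm hν h1 h2 hs p),
    integral_const_mul, integral_convTerm l1 l2 hν ht]
  have hsign : ((-1 : ℝ) ^ (p.1 + p.2)) * ((-1) ^ p.1 * (-1) ^ p.2) = 1 := by
    rw [← pow_add, ← mul_pow]; norm_num
  have hG : 0 < Real.Gamma (ν * (p.1 + p.2 : ℕ) + 2 * ν) := Real.Gamma_pos_of_pos (by positivity)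
  have hp : l1 ^ p.1 * l2 ^ p.2 ≤ (l1 + l2) ^ (p.1 + p.2) := by
    rw [pow_add]; gcongr <;> linarith
  have ht' : t ^ (ν * (p.1 + p.2 : ℕ) + 2 * ν - 1) =
      t ^ (2 * ν - 1) * (t ^ ν) ^ (p.1 + p.2) := by
    rw [add_sub_assoc, Real.rpow_add ht, Real.rpow_mul ht.le, Real.rpow_natCast, mul_comm]
  calc _ = ((-1 : ℝ) ^ (p.1 + p.2)) * ((-1) ^ p.1 * (-1) ^ p.2) * (l1 * l2 * t ^ (2 * ν - 1) *
        ((l1 ^ p.1 * l2 ^ p.2) * (t ^ ν) ^ (p.1 + p.2) /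
          Real.Gamma (ν * (p.1 + p.2 : ℕ) + 2 * ν))) := by
        rw [convCoeff, ht', neg_pow l1, neg_pow l2]; ring
    _ ≤ l1 * l2 * t ^ (2 * ν - 1) * ((l1 + l2) ^ (p.1 + p.2) * (t ^ ν) ^ (p.1 + p.2) /
          Real.Gamma (ν * (p.1 + p.2 : ℕ) + 2 * ν)) := by
        rw [hsign, one_mul]; gcongr
    _ ≤ l1 * l2 * t ^ (2 * ν - 1) * (C * (1 / 2) ^ (p.1 + p.2)) := by
        rw [← mul_pow]; gcongr; exact hC _
    _ = _ := by rw [pow_add]; ring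

lemma tsum_convTerm {ν l1 l2 t s : ℝ} (hν : 0 < ν) (hs : s ∈ Ioo 0 t) :
    (l1 * s ^ (ν - 1) * mittagLeffler ν ν (-l1 * s ^ ν)) *
        (l2 * (t - s) ^ (ν - 1) * mittagLeffler ν ν (-l2 * (t - s) ^ ν)) =
      ∑' p, convTerm ν l1 l2 t p s := by
  have hpow : ∀ (u : ℝ) (n : ℕ), 0 < u → u ^ (ν * n + ν - 1) = u ^ (ν - 1) * (u ^ ν) ^ n := by
    intro u n hu
    rw [add_sub_assoc, Real.rpow_add hu, Real.rpow_mul hu.le, Real.rpow_natCast, mul_comm]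
  rw [mul_mul_mul_comm, mittagLeffler, mittagLeffler, tsum_mul_tsum_of_summable_norm
    (summable_norm_mittagLeffler hν hν _) (summable_norm_mittagLeffler hν hν _), ← tsum_mul_left]
  refine tsum_congr fun p => ?_
  rw [convTerm, hpow s _ hs.1, hpow (t - s) _ (sub_pos.2 hs.2), mul_pow, mul_pow]
  ring

/-- The double series of integrals, summed over antidiagonals `j + k = n`. Distinctness of the two
rates is what allows the factor `l2 - l1` to be divided out. -/
lemma tsum_integral_convTerm {ν l1 l2 t : ℝ} (hne : l1 ≠ l2)
    (hsum : Summable fun p : ℕ × ℕ =>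
      l1 * l2 * ((-l1) ^ p.1 * (-l2) ^ p.2) * convCoeff ν t (p.1 + p.2)) :
    ∑' p : ℕ × ℕ, l1 * l2 * ((-l1) ^ p.1 * (-l2) ^ p.2) * convCoeff ν t (p.1 + p.2) =
      ∑' n : ℕ, l1 * l2 / (l2 - l1) * (((-l1) ^ (n + 1) - (-l2) ^ (n + 1)) * convCoeff ν t n) := by
  have hne' : l2 - l1 ≠ 0 := sub_ne_zero.2 hne.symm
  have hs := (Finset.HasAntidiagonal.sigmaAntidiagonalEquivProd (A := ℕ)).summable_iff.2 hsum
  refine ((Finset.HasAntidiagonal.sigmaAntidiagonalEquivProd (A := ℕ)).tsum_eq _).symm.trans ?_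
  refine hs.tsum_sigma.trans ?_
  refine tsum_congr fun n => ?_
  rw [← sub_mul_sum_antidiagonal, tsum_fintype, mul_assoc, ← mul_assoc (l1 * l2 / (l2 - l1)),
    show l1 * l2 / (l2 - l1) * (-l1 - -l2) = l1 * l2 by field_simp; ring,
    ← Finset.sum_coe_sort (Finset.HasAntidiagonal.antidiagonal n), Finset.sum_mul, Finset.mul_sum]
  refine Finset.sum_congr rfl fun p _ => ?_
  have hp : p.1.1 + p.1.2 = n := Finset.HasAntidiagonal.mem_antidiagonal.1 p.2
  change l1 * l2 * ((-l1) ^ p.1.1 * (-l2) ^ p.1.2) * convCoeff ν t (p.1.1 + p.1.2) = _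
  rw [hp, mul_assoc]

lemma mittagLeffler_sub {ν l1 l2 t : ℝ} (hν : 0 < ν) (ht : 0 < t) :
    t ^ (ν - 1) * (mittagLeffler ν ν (-l1 * t ^ ν) - mittagLeffler ν ν (-l2 * t ^ ν)) =
      ∑' n : ℕ, ((-l1) ^ (n + 1) - (-l2) ^ (n + 1)) * convCoeff ν t n := by
  have s1 := (summable_norm_mittagLeffler hν hν (-l1 * t ^ ν)).of_norm
  have s2 := (summable_norm_mittagLeffler hν hν (-l2 * t ^ ν)).of_norm
  rw [mittagLeffler, mittagLeffler, ← s1.tsum_sub s2, (s1.sub s2).tsum_eq_zero_add]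
  simp only [pow_zero, sub_self, zero_add]
  rw [← tsum_mul_left]
  refine tsum_congr fun n => ?_
  have e : ν * ((n + 1 : ℕ) : ℝ) + ν = ν * n + 2 * ν := by push_cast; ring
  have e' : t ^ (ν * n + 2 * ν - 1) = t ^ (ν - 1) * (t ^ ν) ^ (n + 1) := by
    rw [← Real.rpow_natCast, ← Real.rpow_mul ht.le, ← Real.rpow_add ht]
    congr 1; push_cast; ring
  rw [convCoeff, e, e', mul_pow, mul_pow]
  ring

/-- Convolution identity (ebal) for the fractional waiting-time densities. -/
theorem convolution_fractional_waiting_times (ν l1 l2 t : ℝ) (hν0 : 0 < ν) (hν1 : ν ≤ 1)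
    (h1 : 0 < l1) (h2 : 0 < l2) (hne : l1 ≠ l2) (ht : 0 < t) :
    ∫ s in (0 : ℝ)..t,
        (l1 * s ^ (ν - 1) * mittagLeffler ν ν (-l1 * s ^ ν)) *
          (l2 * (t - s) ^ (ν - 1) * mittagLeffler ν ν (-l2 * (t - s) ^ ν))
      = (l1 * l2 / (l2 - l1)) * t ^ (ν - 1) *
          (mittagLeffler ν ν (-l1 * t ^ ν) - mittagLeffler ν ν (-l2 * t ^ ν)) := by
  have key := hasSum_integral_of_summable_integral_norm
    (fun p => integrableOn_convTerm l1 l2 hν0 ht p)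
    (summable_integral_norm_convTerm hν0 h1 h2 ht)
  simp only [integral_convTerm l1 l2 hν0 ht] at key
  rw [intervalIntegral.integral_of_le ht.le, integral_Ioc_eq_integral_Ioo,
    setIntegral_congr_fun measurableSet_Ioo (fun s hs => tsum_convTerm hν0 hs), ← key.tsum_eq,
    tsum_integral_convTerm hne key.summable, mul_assoc, mittagLeffler_sub hν0 ht,
    tsum_mul_left]
end

section
/- Let 0 < α < 1, s > 0 and z > 0. Then ∫_0^∞ e^{−z t} · t^{−α} W_{−α,1−α}(−s t^{−α}) dt = z^{α−1} e^{−s z^α}, where W_{−α,1−α}(−x) = ∑_{r=0}^∞ (−x)^r/(r! · Γ(1 − α(r+1))) (with the convention 1/Γ(w) = 0 when w is a nonpositive integer). -/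
/-!
By the reflection formula, `1 / Γ(1 - p) = Γ(p) sin (π p) / π` (`inv_Gamma_one_sub`), and
`Γ(p) sin (π p) t ^ (-p)` is the imaginary part of a Hankel-type integral `∫ ζ ^ (p - 1) e ^ (t ζ) dζ`
along a ray `arg ζ = θ` with `π / 2 < θ < π` (`hankel_gamma`). Taking `p = α (r + 1)` and summing over
`r` gives
`t ^ (-α) W(-s t ^ (-α)) = (1 / π) Im ∫ ζ ^ (α - 1) exp (t ζ - s ζ ^ α) dζ` (`density_repr`).
On that ray `Re ζ < 0`, so the Laplace transform can be taken under the integral and replaces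
`e ^ (t ζ)` by `1 / (z - ζ)` (`laplace_eq`). If also `α θ < π / 2`, then `exp (-s ζ ^ α)` decays
in the whole sector `0 ≤ arg ζ ≤ θ`, and the ray can be turned to the positive real axis, where
the integrand is real apart from a pole at `ζ = z`. That pole contributes `π z ^ (α - 1) exp (-s z ^ α)`
to the imaginary part (`residue_integral`).

Everything is written in the coordinate `w = log ζ`, with `dζ = ζ dw`: rays become horizontal lines,
sectors become strips, and powers of `ζ` are entire functions of `w`. The pole is removed by
subtracting an explicit function whose primitive is a logarithm (`tendsto_log_quot`), so that only
Cauchy's theorem for rectangles is needed (`strip_shift`).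
-/

open MeasureTheory

/-- The Wright function `W_{−α,1−α}` evaluated at `x`:
`W_{−α,1−α}(x) = ∑_{r≥0} x^r/(r! Γ(1−α(r+1)))`.
(Note `Real.Gamma` vanishes at nonpositive integers, so the convention
`1/Γ = 0` there is automatic.) -/
noncomputable def wrightW (α x : ℝ) : ℝ :=
  ∑' r : ℕ, x ^ r / ((Nat.factorial r : ℝ) * Real.Gamma (1 - α * ((r : ℝ) + 1)))

section Aux

open Filter Topology Set

/-! ### Shifting lines of integration, and Hankel's integral -/

/-- Cauchy's theorem on a horizontal strip: if `f` is holomorphic on `a ≤ Im w ≤ b` and tends to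
`0` at both ends, uniformly in `Im w`, then its integrals along the two boundary lines agree, in
the sense of symmetric limits (no integrability on the lines is required). -/
lemma strip_shift {a b : ℝ} (hab : a ≤ b) {f : ℂ → ℂ}
    (hf : DifferentiableOn ℂ f {w | a ≤ w.im ∧ w.im ≤ b}) {B : ℝ → ℝ}
    (hB0 : Tendsto B atBot (𝓝 0)) (hB1 : Tendsto B atTop (𝓝 0)) (X₀ : ℝ)
    (hbd : ∀ x y : ℝ, X₀ ≤ |x| → a ≤ y → y ≤ b → ‖f (x + y * Complex.I)‖ ≤ B x) :
    Tendsto (fun X : ℝ => (∫ x in -X..X, f (x + a * Complex.I)) -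
      ∫ x in -X..X, f (x + b * Complex.I)) atTop (𝓝 0) := by
  have hlim : Tendsto (fun X : ℝ => B X * |b - a| + B (-X) * |b - a|) atTop (𝓝 0) := by
    simpa using (hB1.mul_const |b - a|).add
      ((hB0.comp tendsto_neg_atTop_atBot).mul_const |b - a|)
  refine squeeze_zero_norm' ?_ hlim
  filter_upwards [eventually_ge_atTop X₀, eventually_ge_atTop (0 : ℝ)] with X hX hX0
  have key := Complex.integral_boundary_rect_eq_zero_of_differentiableOn f
    (((-X : ℝ) : ℂ) + a * Complex.I) ((X : ℂ) + b * Complex.I) (hf.mono (by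
      intro w hw
      rw [Complex.mem_reProdIm] at hw
      have h2 := hw.2
      simp only [Complex.add_im, Complex.mul_im, Complex.ofReal_im, Complex.ofReal_re,
        Complex.I_im, Complex.I_re] at h2
      rw [uIcc_of_le (by simpa using hab)] at h2
      simpa using h2))
  simp only [Complex.add_re, Complex.add_im, Complex.mul_re, Complex.mul_im, Complex.ofReal_im,
    Complex.ofReal_re, Complex.I_im, Complex.I_re, mul_zero, mul_one, zero_add, add_zero,
    sub_zero] at key
  have e : (∫ x in -X..X, f (x + a * Complex.I)) - (∫ x in -X..X, f (x + b * Complex.I)) =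
      Complex.I * (∫ y in a..b, f (((-X : ℝ) : ℂ) + y * Complex.I)) -
      Complex.I * (∫ y in a..b, f ((X : ℂ) + y * Complex.I)) := by
    simp only [smul_eq_mul] at key
    linear_combination key
  have side : ∀ x : ℝ, X₀ ≤ |x| →
      ‖∫ y in a..b, f ((x : ℂ) + y * Complex.I)‖ ≤ B x * |b - a| := fun x hx =>
    intervalIntegral.norm_integral_le_of_norm_le_const fun y hy => by
      rw [uIoc_of_le hab] at hy
      exact hbd x y hx hy.1.le hy.2
  rw [e]
  refine (norm_sub_le _ _).trans ?_
  simp only [norm_mul, Complex.norm_I, one_mul]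
  have h1 := side X (by rwa [abs_of_nonneg hX0])
  have h2 := side (-X) (by rwa [abs_neg, abs_of_nonneg hX0])
  linarith

lemma integrable_exp_sub_exp {p c : ℝ} (hp : 0 < p) (hc : 0 < c) :
    Integrable fun x : ℝ => Real.exp (p * x - c * Real.exp x) := by
  have h := integrableOn_rpow_mul_exp_neg_mul_rpow (p := 1) (s := p - 1) (b := c)
    (by linarith) one_pos hc
  rw [← Real.range_exp, ← image_univ, integrableOn_image_iff_integrableOn_abs_deriv_smul
    MeasurableSet.univ (fun x _ => (Real.hasDerivAt_exp x).hasDerivWithinAt)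
    Real.exp_injective.injOn, integrableOn_univ] at h
  refine h.congr (ae_of_all _ fun x => ?_)
  simp only [Real.abs_exp, smul_eq_mul, Real.rpow_one]
  rw [← Real.exp_mul, ← Real.exp_add, ← Real.exp_add]
  ring_nf

lemma integral_exp_sub_exp {p c : ℝ} (hp : 0 < p) (hc : 0 < c) :
    ∫ x : ℝ, Real.exp (p * x - c * Real.exp x) = c ^ (-p) * Real.Gamma p := by
  have h := Real.integral_rpow_mul_exp_neg_mul_Ioi hp hc
  rw [← Real.range_exp, ← image_univ, integral_image_eq_integral_abs_deriv_smul
    MeasurableSet.univ (fun x _ => (Real.hasDerivAt_exp x).hasDerivWithinAt)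
    Real.exp_injective.injOn, setIntegral_univ] at h
  rw [Real.rpow_neg hc.le, ← Real.inv_rpow hc.le, ← one_div, ← h]
  refine integral_congr_ae (ae_of_all _ fun x => ?_)
  simp only [Real.abs_exp, smul_eq_mul]
  rw [← Real.exp_mul, ← Real.exp_add, ← Real.exp_add]
  ring_nf

lemma tendsto_exp_sub_exp {p c : ℝ} (hp : 0 < p) (hc : 0 < c) :
    Tendsto (fun x : ℝ => Real.exp (p * x - c * Real.exp x)) atBot (𝓝 0) ∧
    Tendsto (fun x : ℝ => Real.exp (p * x - c * Real.exp x)) atTop (𝓝 0) := by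
  constructor
  · refine squeeze_zero (fun x => (Real.exp_pos _).le) (g := fun x => Real.exp (p * x))
      (fun x => ?_) ?_
    · apply Real.exp_le_exp.mpr
      have := mul_pos hc (Real.exp_pos x)
      linarith
    · exact Real.tendsto_exp_atBot.comp (tendsto_id.const_mul_atBot hp)
  · have := (tendsto_rpow_mul_exp_neg_mul_atTop_nhds_zero p c hc).comp Real.tendsto_exp_atTop
    refine this.congr fun x => ?_
    simp only [Function.comp]
    rw [← Real.exp_mul, ← Real.exp_add]
    ring_nf

/-- The size of the Hankel integrand `exp (p w + t e ^ w)` on the line `Im w = y`; for `t > 0` it decays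
doubly exponentially as `x → ∞` exactly when `cos y < 0`. -/
lemma norm_exp_line (p t x y : ℝ) :
    ‖Complex.exp (p * (x + y * Complex.I) + t * Complex.exp (x + y * Complex.I))‖ =
      Real.exp (p * x + t * (Real.exp x * Real.cos y)) := by
  rw [Complex.norm_exp]
  simp [Complex.exp_re]

/-- Half of Hankel's contour integral, in the coordinate `w = log ζ`. The line `Im w = θ`
(the ray `arg ζ = θ`) is moved to `Im w = π`, i.e. to the negative real axis, where the
integral is Euler's. -/
lemma hankel_gamma {θ p t : ℝ} (hθ : Real.pi / 2 < θ) (hθ' : θ < Real.pi) (hp : 0 < p)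
    (ht : 0 < t) :
    ∫ x : ℝ, Complex.exp (p * (x + θ * Complex.I) + t * Complex.exp (x + θ * Complex.I)) =
      Complex.exp (p * (Real.pi * Complex.I)) * (t ^ (-p) * Real.Gamma p : ℝ) := by
  have hcos : Real.cos θ < 0 := Real.cos_neg_of_pi_div_two_lt_of_lt hθ (by linarith)
  set c : ℝ := t * (-Real.cos θ) with hc
  have hc0 : 0 < c := mul_pos ht (by linarith)
  have h0 : Tendsto _ _ _ := strip_shift (a := θ) (b := Real.pi) hθ'.le
    (f := fun w => Complex.exp (p * w + t * Complex.exp w))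
    (Differentiable.differentiableOn (by fun_prop))
    (tendsto_exp_sub_exp hp hc0).1 (tendsto_exp_sub_exp hp hc0).2 0 (by
      intro x y _ hy hy'
      rw [norm_exp_line]
      apply Real.exp_le_exp.mpr
      have : Real.cos y ≤ Real.cos θ :=
        Real.cos_le_cos_of_nonneg_of_le_pi (by linarith [Real.pi_pos]) hy' hy
      have := mul_le_mul_of_nonneg_left this (mul_pos ht (Real.exp_pos x)).le
      rw [hc]
      linarith)
  have i1 : Integrable fun x : ℝ =>
      Complex.exp (p * (x + θ * Complex.I) + t * Complex.exp (x + θ * Complex.I)) := by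
    refine (integrable_exp_sub_exp hp hc0).mono' (Continuous.aestronglyMeasurable (by fun_prop))
      (ae_of_all _ fun x => ?_)
    rw [norm_exp_line, hc]
    apply le_of_eq
    ring_nf
  have e2 : ∀ x : ℝ,
      Complex.exp (p * (x + Real.pi * Complex.I) + t * Complex.exp (x + Real.pi * Complex.I)) =
      Complex.exp (p * (Real.pi * Complex.I)) * (Real.exp (p * x - t * Real.exp x) : ℝ) := by
    intro x
    rw [Complex.exp_add (x : ℂ), Complex.exp_pi_mul_I]
    push_cast
    rw [← Complex.exp_add]
    ring_nf
  simp only [e2] at h0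
  have i2 : Integrable fun x : ℝ =>
      Complex.exp (p * (Real.pi * Complex.I)) * (Real.exp (p * x - t * Real.exp x) : ℝ) :=
    (integrable_exp_sub_exp hp ht).ofReal.const_mul _
  have h1 := (intervalIntegral_tendsto_integral i1 tendsto_neg_atTop_atBot tendsto_id).sub
    (intervalIntegral_tendsto_integral i2 tendsto_neg_atTop_atBot tendsto_id)
  have := sub_eq_zero.mp (tendsto_nhds_unique h1 h0)
  rw [this, integral_const_mul, integral_complex_ofReal, integral_exp_sub_exp hp ht]

/-- The reflection formula for `1 / Γ(1 - p)`. When `p` is a positive integer both sides vanish: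
the left by the value `Real.Gamma (1 - p) = 0` at a pole. -/
lemma inv_Gamma_one_sub {p : ℝ} (hp : 0 < p) :
    (Real.Gamma (1 - p))⁻¹ = Real.Gamma p * Real.sin (Real.pi * p) / Real.pi := by
  have h := Real.Gamma_mul_Gamma_one_sub p
  have hG := (Real.Gamma_pos_of_pos hp).ne'
  by_cases hs : Real.sin (Real.pi * p) = 0
  · rw [hs, div_zero] at h
    have : Real.Gamma (1 - p) = 0 := by simpa [hG] using h
    simp [this, hs]
  · have h1 : Real.Gamma (1 - p) ≠ 0 := by
      intro h0
      rw [h0, mul_zero] at h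
      exact (div_ne_zero Real.pi_ne_zero hs) h.symm
    have := Real.pi_ne_zero
    rw [eq_div_iff hs] at h
    rw [inv_eq_iff_eq_inv, inv_div, eq_div_iff (mul_ne_zero hG hs)]
    linarith

/-- Since `α < 1`, the term `s ζ ^ α` is dominated by `c ζ` up to a constant. -/
lemma exists_mul_exp_le {α s c : ℝ} (hα0 : 0 < α) (hα1 : α < 1) (hs : 0 < s) (hc : 0 < c) :
    ∃ C : ℝ, ∀ x : ℝ, s * Real.exp (α * x) ≤ c * Real.exp x + C := by
  obtain ⟨M, hM⟩ : ∃ M : ℝ, s ≤ c * Real.exp ((1 - α) * M) := by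
    -- equality holds for this choice
    refine ⟨Real.log (s / c) / (1 - α), ?_⟩
    rw [mul_div_cancel₀ _ (by linarith), Real.exp_log (by positivity), mul_div_cancel₀ _ hc.ne']
  refine ⟨s * Real.exp (α * M), fun x => ?_⟩
  rcases le_total x M with h | h
  · have : Real.exp (α * x) ≤ Real.exp (α * M) := by gcongr
    have := mul_le_mul_of_nonneg_left this hs.le
    have := mul_pos hc (Real.exp_pos x)
    linarith
  · have h1 : Real.exp ((1 - α) * M) ≤ Real.exp ((1 - α) * x) := by
      have : 0 ≤ 1 - α := by linarith
      gcongr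
    have h2 : s ≤ c * Real.exp ((1 - α) * x) :=
      hM.trans (mul_le_mul_of_nonneg_left h1 hc.le)
    have h3 := mul_le_mul_of_nonneg_right h2 (Real.exp_pos (α * x)).le
    rw [mul_assoc, ← Real.exp_add, show (1 - α) * x + α * x = x by ring] at h3
    have := mul_pos hs (Real.exp_pos (α * M))
    linarith

/-! ### The density and its Laplace transform as line integrals -/

lemma re_exp_line (x y : ℝ) :
    (Complex.exp (x + y * Complex.I)).re = Real.exp x * Real.cos y := by
  simp [Complex.exp_re]

/-- Integral representation of the density: `t ^ (-α) W(-s t ^ (-α))` is `1/π` times the imaginary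
part of `∫ exp (α w + t e ^ w - s e ^ (α w))` over the line `Im w = θ`. Expanding
`exp (-s e ^ (α w))` and integrating termwise gives back the Wright series. -/
lemma density_repr {α s t θ : ℝ} (hα0 : 0 < α) (hα1 : α < 1) (hs : 0 < s) (ht : 0 < t)
    (hθ : Real.pi / 2 < θ) (hθ' : θ < Real.pi) :
    t ^ (-α) * wrightW α (-s * t ^ (-α)) =
      (∫ x : ℝ, Complex.exp (α * (x + θ * Complex.I) + t * Complex.exp (x + θ * Complex.I)
        - s * Complex.exp (α * (x + θ * Complex.I)))).im / Real.pi := by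
  have hcos : Real.cos θ < 0 := Real.cos_neg_of_pi_div_two_lt_of_lt hθ (by linarith)
  set c : ℝ := t * (-Real.cos θ) with hc
  have hc0 : 0 < c := mul_pos ht (by linarith)
  obtain ⟨C, hC⟩ := exists_mul_exp_le hα0 hα1 hs (half_pos hc0)
  have hp : ∀ r : ℕ, 0 < α * ((r : ℝ) + 1) := fun r => by positivity
  -- `F r` is the `r`-th term of the expansion, and `bd r` its norm
  let F : ℕ → ℝ → ℂ := fun r x => ((-s) ^ r / (Nat.factorial r : ℝ) : ℝ) *
    Complex.exp ((α * ((r : ℝ) + 1) : ℝ) * (x + θ * Complex.I) +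
      t * Complex.exp (x + θ * Complex.I))
  let bd : ℕ → ℝ → ℝ := fun r x => (s * Real.exp (α * x)) ^ r / (Nat.factorial r : ℝ) *
    Real.exp (α * x - c * Real.exp x)
  have hbdsum : ∀ x, HasSum (fun r => bd r x)
      (Real.exp (s * Real.exp (α * x)) * Real.exp (α * x - c * Real.exp x)) := fun x => by
    have := NormedSpace.expSeries_div_hasSum_exp (s * Real.exp (α * x))
    rw [← Real.exp_eq_exp_ℝ] at this
    exact this.mul_right _
  have hF : HasSum (fun r => ∫ x, F r x) (∫ x : ℝ, Complex.exp (α * (x + θ * Complex.I) +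
      t * Complex.exp (x + θ * Complex.I) - s * Complex.exp (α * (x + θ * Complex.I)))) := by
    refine hasSum_integral_of_dominated_convergence bd
      (fun r => Continuous.aestronglyMeasurable (by fun_prop)) (fun r => ae_of_all _ fun x => ?_)
      (ae_of_all _ fun x => (hbdsum x).summable) ?_ (ae_of_all _ fun x => ?_)
    · simp only [F, bd]
      rw [norm_mul, norm_exp_line, Complex.norm_real, Real.norm_eq_abs, abs_div, abs_pow, abs_neg,
        abs_of_pos hs, Nat.abs_cast, mul_pow, ← Real.exp_nat_mul, mul_div_right_comm, mul_assoc (s ^ r / _),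
        ← Real.exp_add, hc]
      apply le_of_eq
      ring_nf
    -- half of the decay `exp (-c e ^ x)` absorbs the growth of `exp (s e ^ (α x))`
    · simp only [fun x => (hbdsum x).tsum_eq]
      refine ((integrable_exp_sub_exp hα0 (half_pos hc0)).const_mul (Real.exp C)).mono'
        (Continuous.aestronglyMeasurable (by fun_prop)) (ae_of_all _ fun x => ?_)
      rw [Real.norm_of_nonneg (by positivity), ← Real.exp_add, ← Real.exp_add]
      apply Real.exp_le_exp.mpr
      linarith [hC x]
    · have := NormedSpace.expSeries_div_hasSum_exp (-s * Complex.exp (α * (x + θ * Complex.I)))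
      rw [← Complex.exp_eq_exp_ℂ] at this
      have := this.mul_right
        (Complex.exp (α * (x + θ * Complex.I) + t * Complex.exp (x + θ * Complex.I)))
      rw [← Complex.exp_add] at this
      have hfun : (fun r => F r x) = fun r : ℕ =>
          (-s * Complex.exp (α * (x + θ * Complex.I))) ^ r / (Nat.factorial r : ℂ) *
          Complex.exp (α * (x + θ * Complex.I) + t * Complex.exp (x + θ * Complex.I)) := by
        ext r
        simp only [F]
        rw [mul_pow, ← Complex.exp_nat_mul, mul_div_right_comm, mul_assoc ((-s : ℂ) ^ r / _),
          ← Complex.exp_add]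
        push_cast
        ring_nf
      rw [hfun, show ∀ a b c : ℂ, a + b - s * c = -s * c + (a + b) from fun a b c => by ring]
      exact this
  have hIm := (Complex.hasSum_im hF).div_const Real.pi
  rw [← hIm.tsum_eq, wrightW, ← tsum_mul_left]
  refine tsum_congr fun r => ?_
  simp only [F]
  rw [integral_const_mul, hankel_gamma hθ hθ' (hp r) ht, Complex.im_ofReal_mul,
    Complex.im_mul_ofReal, ← mul_assoc (((α * ((r : ℝ) + 1) : ℝ)) : ℂ), ← Complex.ofReal_mul,
    Complex.exp_ofReal_mul_I_im, div_mul_eq_div_mul_one_div _ _ (Real.Gamma _), one_div,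
    inv_Gamma_one_sub (hp r), mul_pow, ← Real.rpow_mul_natCast ht.le,
    show -(α * ((r : ℝ) + 1)) = -α + -α * r by ring, Real.rpow_add ht, mul_comm Real.pi]
  ring

/-- The factor left after integrating out `t` is still integrable, now because `cos (α θ) > 0`
makes `exp (-s e ^ (α w))` decay. -/
lemma integrable_kernel {α s θ : ℝ} (hα0 : 0 < α) (hs : 0 < s) (hc : 0 < Real.cos (α * θ)) :
    Integrable fun x : ℝ => Complex.exp (α * (x + θ * Complex.I)
        - s * Complex.exp (α * (x + θ * Complex.I))) := by
  have h := (integrable_exp_sub_exp one_pos (mul_pos hs hc)).comp_mul_left' hα0.ne'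
  refine h.mono' (Continuous.aestronglyMeasurable (by fun_prop)) (ae_of_all _ fun x => ?_)
  rw [Complex.norm_exp]
  apply Real.exp_le_exp.mpr
  apply le_of_eq
  rw [show (α : ℂ) * (x + θ * Complex.I) = (α * x : ℝ) + (α * θ : ℝ) * Complex.I by
    push_cast; ring, Complex.sub_re, Complex.re_ofReal_mul, re_exp_line]
  simp
  ring

/-- The Laplace transform computed by Fubini from `density_repr`. On the line `Im w = θ` the real
part of `e ^ w` is negative, so `∫ exp ((e ^ w - z) t) dt = 1 / (z - e ^ w)`. -/
lemma laplace_eq {α s z θ : ℝ} (hα0 : 0 < α) (hα1 : α < 1) (hs : 0 < s) (hz : 0 < z)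
    (hθ : Real.pi / 2 < θ) (hθ' : θ < Real.pi) (hc : 0 < Real.cos (α * θ)) :
    ∫ t in Set.Ioi (0 : ℝ),
        Real.exp (-z * t) * (t ^ (-α) * wrightW α (-s * t ^ (-α))) =
      (∫ x : ℝ, Complex.exp (α * (x + θ * Complex.I)
        - s * Complex.exp (α * (x + θ * Complex.I))) /
          (z - Complex.exp (x + θ * Complex.I))).im / Real.pi := by
  have hcos : Real.cos θ < 0 := Real.cos_neg_of_pi_div_two_lt_of_lt hθ (by linarith)
  have hre : ∀ x : ℝ, (Complex.exp (x + θ * Complex.I)).re < 0 := fun x => by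
    rw [re_exp_line]
    exact mul_neg_of_pos_of_neg (Real.exp_pos x) hcos
  set φ : ℝ → ℂ := fun x => Complex.exp (α * (x + θ * Complex.I)
        - s * Complex.exp (α * (x + θ * Complex.I))) with hφ
  have hφc : Continuous φ := by fun_prop
  have hφi : Integrable φ := integrable_kernel hα0 hs hc
  let K : ℝ → ℝ → ℂ := fun t x =>
    Complex.exp ((-z + Complex.exp (x + θ * Complex.I)) * t) * φ x
  have hK : Integrable (Function.uncurry K)
      ((volume.restrict (Set.Ioi (0 : ℝ))).prod volume) := by
    have h1 : IntegrableOn (fun t : ℝ => Real.exp (-z * t)) (Set.Ioi 0) :=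
      integrableOn_exp_mul_Ioi (by linarith) 0
    have h2 := Integrable.mul_prod (μ := volume.restrict (Set.Ioi (0 : ℝ))) h1 hφi.norm
    refine h2.mono' (Continuous.aestronglyMeasurable ?_) ?_
    · simp only [K, Function.uncurry_def]
      fun_prop
    · rw [← Measure.restrict_univ (μ := (volume : Measure ℝ)), Measure.prod_restrict]
      filter_upwards [ae_restrict_mem (measurableSet_Ioi.prod MeasurableSet.univ)] with q hq
      have hq1 : 0 < q.1 := hq.1
      simp only [K, Function.uncurry_def]
      rw [norm_mul]
      refine mul_le_mul_of_nonneg_right ?_ (norm_nonneg _)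
      rw [Complex.norm_exp]
      apply Real.exp_le_exp.mpr
      rw [Complex.re_mul_ofReal, Complex.add_re, Complex.neg_re, Complex.ofReal_re]
      exact mul_le_mul_of_nonneg_right (by linarith [hre q.2]) hq1.le
  have e1 : ∀ t ∈ Set.Ioi (0 : ℝ),
      Real.exp (-z * t) * (t ^ (-α) * wrightW α (-s * t ^ (-α))) =
        Complex.imCLM (∫ x, K t x) / Real.pi := by
    intro t ht
    rw [density_repr hα0 hα1 hs ht hθ hθ', ← mul_div_assoc, ← Complex.im_ofReal_mul,
      ← integral_const_mul]
    simp only [K, hφ, Complex.imCLM_apply]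
    congr 3
    ext x
    push_cast
    rw [← Complex.exp_add, ← Complex.exp_add]
    ring_nf
  rw [setIntegral_congr_fun measurableSet_Ioi e1, integral_div,
    ContinuousLinearMap.integral_comp_comm Complex.imCLM (φ := fun t => ∫ x, K t x)
      hK.integral_prod_left,
    integral_integral_swap hK]
  simp only [Complex.imCLM_apply]
  congr 3
  ext x
  simp only [K, hφ]
  rw [integral_mul_const, integral_exp_mul_complex_Ioi (by simpa using by linarith [hre x])]
  simp only [Complex.ofReal_zero, mul_zero, Complex.exp_zero]
  rw [← neg_div_neg_eq]
  ring_nf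

/-! ### The contribution of the pole -/

/-- The contribution of the pole. The primitive is `log ((z + e ^ w) / (z - e ^ w))`; on the line
`Im w = θ` its argument stays in the upper half plane and runs from `1` to `-1`, so the logarithm
increases by `π i`. -/
lemma tendsto_log_quot {z θ : ℝ} (hz : 0 < z) (hθ : 0 < θ) (hθ' : θ < Real.pi) :
    Tendsto (fun X : ℝ => ∫ x in -X..X, 2 * z * Complex.exp (x + θ * Complex.I) /
      (z ^ 2 - Complex.exp (x + θ * Complex.I) ^ 2)) atTop (𝓝 (Real.pi * Complex.I)) := by
  set ζ : ℝ → ℂ := fun x => Complex.exp (x + θ * Complex.I) with hζ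
  have hζc : Continuous ζ := by fun_prop
  have him : ∀ x, 0 < (ζ x).im := fun x => by
    simp only [hζ, Complex.exp_im]
    simp only [Complex.add_re, Complex.add_im, Complex.mul_re, Complex.mul_im, Complex.ofReal_im,
      Complex.ofReal_re, Complex.I_im, Complex.I_re, mul_zero, mul_one, zero_add, add_zero,
      sub_zero]
    exact mul_pos (Real.exp_pos x) (Real.sin_pos_of_pos_of_lt_pi hθ hθ')
  have hm : ∀ x, (z : ℂ) - ζ x ≠ 0 := fun x h => by
    have := congrArg Complex.im h
    simp at this
    exact (him x).ne' this
  have hp : ∀ x, (z : ℂ) + ζ x ≠ 0 := fun x h => by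
    have := congrArg Complex.im h
    simp at this
    exact (him x).ne' this
  have hq : ∀ x, 0 < (((z : ℂ) + ζ x) / (z - ζ x)).im := fun x => by
    rw [Complex.div_im]
    have hn := Complex.normSq_pos.mpr (hm x)
    rw [← sub_div]
    apply div_pos _ hn
    simp
    nlinarith [mul_pos hz (him x)]
  have hd : ∀ x : ℝ, HasDerivAt ζ (ζ x) x := fun x => by
    have := ((Complex.ofRealCLM.hasDerivAt (x := x)).add_const ((θ : ℂ) * Complex.I)).cexp
    simpa [hζ] using this
  have hder : ∀ x : ℝ, HasDerivAt (fun x => Complex.log (((z : ℂ) + ζ x) / (z - ζ x)))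
      (2 * z * ζ x / (z ^ 2 - ζ x ^ 2)) x := fun x => by
    have h := (((hd x).const_add (z : ℂ)).div ((hd x).const_sub (z : ℂ)) (hm x)).clog_real
      (Or.inr (hq x).ne')
    simp only [Pi.div_apply] at h
    convert h using 1
    have h1 := hm x
    have h2 := hp x
    have h3 : (z : ℂ) ^ 2 - ζ x ^ 2 ≠ 0 := by
      rw [sq_sub_sq]
      exact mul_ne_zero h2 h1
    field_simp
    ring
  have hcont : Continuous fun x => 2 * z * ζ x / (z ^ 2 - ζ x ^ 2) := by
    refine Continuous.div (by fun_prop) (by fun_prop) fun x => ?_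
    rw [sq_sub_sq]
    exact mul_ne_zero (hp x) (hm x)
  have hint : ∀ X : ℝ, ∫ x in -X..X, 2 * z * ζ x / (z ^ 2 - ζ x ^ 2) =
      Complex.log (((z : ℂ) + ζ X) / (z - ζ X)) -
        Complex.log (((z : ℂ) + ζ (-X)) / (z - ζ (-X))) := fun X =>
    intervalIntegral.integral_eq_sub_of_hasDerivAt (fun x _ => hder x)
      (hcont.intervalIntegrable _ _)
  refine Tendsto.congr (fun X => (hint X).symm) ?_
  have hz' : (z : ℂ) ≠ 0 := by exact_mod_cast hz.ne'
  have l0 : Tendsto (fun X : ℝ => ζ (-X)) atTop (𝓝 0) := by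
    rw [tendsto_zero_iff_norm_tendsto_zero]
    simp only [hζ, Complex.norm_exp]
    simpa using Real.tendsto_exp_neg_atTop_nhds_zero
  have l1 : Tendsto (fun X : ℝ => (ζ X)⁻¹) atTop (𝓝 0) := by
    rw [tendsto_zero_iff_norm_tendsto_zero]
    simp only [hζ, norm_inv, Complex.norm_exp]
    simpa [← Real.exp_neg] using Real.tendsto_exp_neg_atTop_nhds_zero
  have t0 : Tendsto (fun X : ℝ => Complex.log (((z : ℂ) + ζ (-X)) / (z - ζ (-X)))) atTop
      (𝓝 0) := by
    have h : Tendsto (fun X : ℝ => ((z : ℂ) + ζ (-X)) / (z - ζ (-X))) atTop (𝓝 1) := by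
      simpa [hz', Pi.div_def] using (l0.const_add (z : ℂ)).div (l0.const_sub (z : ℂ)) (by simpa using hz')
    simpa using h.clog (by simp)
  have t1 : Tendsto (fun X : ℝ => Complex.log (((z : ℂ) + ζ X) / (z - ζ X))) atTop
      (𝓝 (Real.pi * Complex.I)) := by
    have h : Tendsto (fun X : ℝ => ((z : ℂ) + ζ X) / (z - ζ X)) atTop (𝓝 (-1)) := by
      have := ((l1.const_mul (z : ℂ)).add_const 1).div ((l1.const_mul (z : ℂ)).sub_const 1)
        (by simp)
      simp only [mul_zero, zero_add, zero_sub] at this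
      rw [show (1 : ℂ) / -1 = -1 by norm_num] at this
      refine this.congr fun X => ?_
      have hne : ζ X ≠ 0 := Complex.exp_ne_zero _
      simp only [Pi.div_apply]
      rw [← mul_div_mul_right _ _ hne]
      congr 1 <;> field_simp
    -- `-1` lies on the branch cut, but the quotient approaches it from above
    have hl := (Complex.continuousWithinAt_log_of_re_neg_of_im_zero (z := -1) (by simp)
      (by simp)).tendsto.comp (tendsto_nhdsWithin_iff.mpr
        ⟨h, Eventually.of_forall fun X => (hq X).le⟩)
    rw [Complex.log_neg_one] at hl
    exact hl
  simpa using t1.sub t0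

/-- In the strip `0 ≤ Im w < π` the function `z ^ 2 - e ^ (2 w)` vanishes only at `log z`. -/
lemma eq_log_of_sq_exp_eq {w : ℂ} {z : ℝ} (hz : 0 < z) (h0 : 0 ≤ w.im) (h1 : w.im < Real.pi)
    (h : Complex.exp w ^ 2 = z ^ 2) : w = Real.log z := by
  rcases sq_eq_sq_iff_eq_or_eq_neg.mp h with h | h
  · rw [Complex.ofReal_log hz.le, ← h, Complex.log_exp (by linarith [Real.pi_pos]) h1.le]
  · exfalso
    have hi := congrArg Complex.im h
    have hr := congrArg Complex.re h
    rw [Complex.exp_im] at hi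
    rw [Complex.exp_re] at hr
    simp at hi hr
    rcases h0.eq_or_lt with h2 | h2
    · rw [← h2] at hr
      simp at hr
      linarith [Real.exp_pos w.re]
    · exact (Real.sin_pos_of_pos_of_lt_pi h2 h1).ne' hi

/-- The bound used for the vertical sides: the numerator is `o(e ^ (2 x))` at `+∞` because `α < 1`,
and `o(1)` at `-∞` because `α > 0`. -/
lemma tendsto_bound {α z : ℝ} (hα0 : 0 < α) (hα1 : α < 1) (hz : 0 < z) (k : ℝ) :
    Tendsto (fun x : ℝ => (Real.exp (α * x) * (z + Real.exp x) + k * Real.exp x) /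
      |z ^ 2 - Real.exp x ^ 2|) atBot (𝓝 0) ∧
    Tendsto (fun x : ℝ => (Real.exp (α * x) * (z + Real.exp x) + k * Real.exp x) /
      |z ^ 2 - Real.exp x ^ 2|) atTop (𝓝 0) := by
  have mk : ∀ β : ℝ, 0 < β → Tendsto (fun x : ℝ => Real.exp (-β * x)) atTop (𝓝 0) := fun β hβ =>
    Real.tendsto_exp_atBot.comp (tendsto_id.const_mul_atTop_of_neg (by linarith))
  constructor
  · have h1 : Tendsto (fun x : ℝ => Real.exp (α * x)) atBot (𝓝 0) :=
      Real.tendsto_exp_atBot.comp (tendsto_id.const_mul_atBot hα0)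
    have h2 := Real.tendsto_exp_atBot
    have := ((h1.mul (h2.const_add z)).add (h2.const_mul k)).div ((h2.pow 2).const_sub (z ^ 2)).abs
      (by simpa using hz.ne')
    simpa [Pi.div_def] using this
  · have h1 := mk (1 - α) (by linarith)
    have h2 := mk 1 one_pos
    have := ((h1.mul ((h2.const_mul z).add_const 1)).add (h2.const_mul k)).div
      (((h2.const_mul z).pow 2).sub_const 1).abs (by simp)
    simp only [zero_mul, mul_zero, add_zero, zero_div, zero_add] at this
    refine this.congr fun x => ?_
    have e2 : |(z * Real.exp (-1 * x)) ^ 2 - 1| =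
        |z ^ 2 - Real.exp x ^ 2| * Real.exp (-2 * x) := by
      rw [← abs_of_pos (Real.exp_pos (-2 * x)), ← abs_mul]
      congr 1
      rw [mul_pow, sub_mul, ← Real.exp_nat_mul, ← Real.exp_nat_mul, ← Real.exp_add]
      have : ((2 : ℕ) : ℝ) * x + -2 * x = 0 := by push_cast; ring
      rw [this, Real.exp_zero]
      push_cast
      ring_nf
    have e1 : Real.exp (-(1 - α) * x) * (z * Real.exp (-1 * x) + 1) + k * Real.exp (-1 * x) =
        (Real.exp (α * x) * (z + Real.exp x) + k * Real.exp x) * Real.exp (-2 * x) := by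
      have a1 : Real.exp (-(1 - α) * x) = Real.exp (α * x) * Real.exp x * Real.exp (-2 * x) := by
        rw [← Real.exp_add, ← Real.exp_add]; ring_nf
      have a2 : Real.exp (-1 * x) = Real.exp x * Real.exp (-2 * x) := by
        rw [← Real.exp_add]; ring_nf
      have a3 : Real.exp x * Real.exp x * Real.exp (-2 * x) = 1 := by
        rw [← Real.exp_add, ← Real.exp_add, ← Real.exp_zero]; ring_nf
      rw [a1, a2]
      linear_combination (Real.exp (α * x) * Real.exp (-2 * x) * z) * a3
    simp only [Pi.div_apply]
    rw [e1, e2, mul_div_mul_right _ _ (Real.exp_ne_zero _)]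

/-- The line integral of `G(w) / (z - e ^ w)`, `G(w) = exp (α w - s e ^ (α w))`, has imaginary part
`π G(log z) / z`. Subtracting `2 G(log z) e ^ w / (z ^ 2 - e ^ (2 w))` removes the pole at
`log z` on the real line; the remainder is shifted to the real line, where it is real.
The condition `α θ < π / 2` keeps `G` under control throughout the strip. -/
lemma residue_integral {α s z θ : ℝ} (hα0 : 0 < α) (hα1 : α < 1) (hs : 0 < s) (hz : 0 < z)
    (hθ : Real.pi / 2 < θ) (hθ' : θ < Real.pi) (hαθ : α * θ < Real.pi / 2) :
    (∫ x : ℝ, Complex.exp (α * (x + θ * Complex.I)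
        - s * Complex.exp (α * (x + θ * Complex.I))) /
          (z - Complex.exp (x + θ * Complex.I))).im =
      Real.pi * (z ^ (α - 1) * Real.exp (-s * z ^ α)) := by
  have hπ := Real.pi_pos
  have hθ0 : 0 < θ := by linarith
  have hcosα : 0 < Real.cos (α * θ) :=
    Real.cos_pos_of_mem_Ioo ⟨by linarith [mul_pos hα0 hθ0], hαθ⟩
  have hcos : Real.cos θ < 0 := Real.cos_neg_of_pi_div_two_lt_of_lt hθ (by linarith)
  set ℓ : ℝ := Real.log z with hℓ
  have hexpℓ : Real.exp ℓ = z := Real.exp_log hz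
  have hexpℓ' : Complex.exp (ℓ : ℂ) = z := by rw [← Complex.ofReal_exp, hexpℓ]
  let G : ℂ → ℂ := fun w => Complex.exp (α * w - s * Complex.exp (α * w))
  let g : ℝ → ℝ := fun x => Real.exp (α * x - s * Real.exp (α * x))
  have hGg : ∀ x : ℝ, G x = g x := fun x => by simp [G, g]
  -- `N / D` is the integrand minus its polar part
  let N : ℂ → ℂ := fun w => G w * (z + Complex.exp w) - 2 * g ℓ * Complex.exp w
  let D : ℂ → ℂ := fun w => z ^ 2 - Complex.exp w ^ 2
  have hN : Differentiable ℂ N := by fun_prop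
  have hD : Differentiable ℂ D := by fun_prop
  have hNℓ : N ℓ = 0 := by
    simp only [N]
    rw [hGg, hexpℓ']
    ring
  have hDℓ : D ℓ = 0 := by
    simp only [D]
    rw [hexpℓ']
    ring
  have hDne : ∀ w : ℂ, 0 ≤ w.im → w.im ≤ θ → w ≠ ℓ → D w ≠ 0 := fun w h0 h1 hw h =>
    hw (eq_log_of_sq_exp_eq hz h0 (by linarith) (sub_eq_zero.mp h).symm)
  -- dividing the difference quotients fills in the removable singularity of `N / D` at `ℓ`
  let F : ℂ → ℂ := fun w => dslope N ℓ w / dslope D ℓ w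
  have hFeq : ∀ w : ℂ, w ≠ ℓ → F w = N w / D w := fun w hw => by
    simp only [F]
    rw [dslope_of_ne _ hw, dslope_of_ne _ hw, slope_def_field, slope_def_field, hNℓ, hDℓ,
      sub_zero, sub_zero, div_div_div_cancel_right₀ (sub_ne_zero.mpr hw)]
  have hdD : dslope D ℓ ℓ ≠ 0 := by
    rw [dslope_same]
    have : HasDerivAt D (-(2 * Complex.exp (ℓ : ℂ) ^ 1 * Complex.exp (ℓ : ℂ))) ℓ := by
      simpa [D] using ((Complex.hasDerivAt_exp (ℓ : ℂ)).pow 2).const_sub ((z : ℂ) ^ 2)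
    rw [this.deriv]
    simp [Complex.exp_ne_zero]
  have hFd : DifferentiableOn ℂ F {w | 0 ≤ w.im ∧ w.im ≤ θ} := by
    have d1 : DifferentiableOn ℂ (dslope N ℓ) univ :=
      (Complex.differentiableOn_dslope univ_mem).mpr hN.differentiableOn
    have d2 : DifferentiableOn ℂ (dslope D ℓ) univ :=
      (Complex.differentiableOn_dslope univ_mem).mpr hD.differentiableOn
    refine (d1.mono (subset_univ _)).div (d2.mono (subset_univ _)) fun w hw => ?_
    by_cases h : w = ℓ
    · rw [h]
      exact hdD
    · rw [dslope_of_ne _ h, slope_def_field, hDℓ, sub_zero]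
      exact div_ne_zero (hDne w hw.1 hw.2 h) (sub_ne_zero.mpr h)
  have hgpos : 0 < g ℓ := Real.exp_pos _
  have hbd : ∀ x y : ℝ, |ℓ| + 1 ≤ |x| → 0 ≤ y → y ≤ θ → ‖F (x + y * Complex.I)‖ ≤
      (Real.exp (α * x) * (z + Real.exp x) + (2 * g ℓ) * Real.exp x) /
        |z ^ 2 - Real.exp x ^ 2| := by
    intro x y hx hy hy'
    have hxℓ : x ≠ ℓ := fun h => by rw [h] at hx; linarith
    have hwℓ : (x + y * Complex.I : ℂ) ≠ ℓ := fun h => hxℓ (by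
      have := congrArg Complex.re h
      simpa using this)
    have hnorm : ‖Complex.exp (x + y * Complex.I)‖ = Real.exp x := by simp [Complex.norm_exp]
    have hGn : ‖G (x + y * Complex.I)‖ ≤ Real.exp (α * x) := by
      simp only [G]
      rw [Complex.norm_exp]
      apply Real.exp_le_exp.mpr
      rw [show (α : ℂ) * (x + y * Complex.I) = (α * x : ℝ) + (α * y : ℝ) * Complex.I by
        push_cast; ring, Complex.sub_re, Complex.re_ofReal_mul, re_exp_line]
      have : 0 ≤ Real.cos (α * y) := Real.cos_nonneg_of_mem_Icc
        ⟨by linarith [mul_nonneg hα0.le hy], by linarith [mul_le_mul_of_nonneg_left hy' hα0.le]⟩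
      have : 0 ≤ s * (Real.exp (α * x) * Real.cos (α * y)) := by positivity
      simpa using this
    rw [hFeq _ hwℓ, norm_div]
    have hden : |z ^ 2 - Real.exp x ^ 2| ≤ ‖D (x + y * Complex.I)‖ := by
      have := abs_norm_sub_norm_le ((z : ℂ) ^ 2) (Complex.exp (x + y * Complex.I) ^ 2)
      rwa [norm_pow, norm_pow, hnorm, Complex.norm_real, Real.norm_of_nonneg hz.le] at this
    have hpos : 0 < |z ^ 2 - Real.exp x ^ 2| := by
      rw [abs_pos, sub_ne_zero]
      intro h
      rw [sq_eq_sq₀ hz.le (Real.exp_pos x).le] at h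
      exact hxℓ (by rw [hℓ, h, Real.log_exp])
    refine div_le_div₀ (by positivity) ?_ hpos hden
    refine (norm_sub_le _ _).trans (add_le_add ?_ ?_)
    · rw [norm_mul]
      refine mul_le_mul hGn ((norm_add_le _ _).trans ?_) (norm_nonneg _) (Real.exp_pos _).le
      rw [hnorm, Complex.norm_real, Real.norm_of_nonneg hz.le]
    · rw [norm_mul, hnorm, norm_mul, Complex.norm_real, Real.norm_of_nonneg hgpos.le]
      simp
  obtain ⟨hB0, hB1⟩ := tendsto_bound hα0 hα1 hz (2 * g ℓ)
  have hstrip := strip_shift hθ0.le hFd hB0 hB1 (|ℓ| + 1) hbd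
  have hreal : ∀ X : ℝ, (∫ x in -X..X, F (x + (0 : ℝ) * Complex.I)).im = 0 := fun X => by
    have : ∫ x in -X..X, F (x + (0 : ℝ) * Complex.I) = ∫ x in -X..X,
        (((g x * (z + Real.exp x) - 2 * g ℓ * Real.exp x) / (z ^ 2 - Real.exp x ^ 2) : ℝ) : ℂ) := by
      refine intervalIntegral.integral_congr_ae ?_
      -- at `x = ℓ` the quotient on the right is `0 / 0`
      have : ∀ᵐ x : ℝ, x ≠ ℓ := by simp [ae_iff]
      filter_upwards [this] with x hx _
      rw [Complex.ofReal_zero, zero_mul, add_zero, hFeq _ (by exact_mod_cast hx)]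
      simp only [N, D]
      rw [hGg]
      push_cast
      rfl
    rw [this, intervalIntegral.integral_ofReal, Complex.ofReal_im]
  have hζim : ∀ x : ℝ, (Complex.exp (x + θ * Complex.I)).re < 0 := fun x => by
    rw [re_exp_line]
    exact mul_neg_of_pos_of_neg (Real.exp_pos x) hcos
  have hwne : ∀ x : ℝ, (x + θ * Complex.I : ℂ) ≠ ℓ := fun x h => by
    have := congrArg Complex.im h
    simp at this
    exact hθ0.ne' this
  have hDθ : ∀ x : ℝ, D (x + θ * Complex.I) ≠ 0 := fun x =>
    hDne _ (by simpa using hθ0.le) (by simp) (hwne x)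
  have hm : ∀ x : ℝ, (z : ℂ) - Complex.exp (x + θ * Complex.I) ≠ 0 := fun x h => hDθ x (by
    simp only [D]
    rw [sq_sub_sq, h, mul_zero])
  have hp : ∀ x : ℝ, (z : ℂ) + Complex.exp (x + θ * Complex.I) ≠ 0 := fun x h => hDθ x (by
    simp only [D]
    rw [sq_sub_sq, h, zero_mul])
  have hz' : (z : ℂ) ≠ 0 := by exact_mod_cast hz.ne'
  have hc1 : Continuous fun x : ℝ =>
      G (x + θ * Complex.I) / (z - Complex.exp (x + θ * Complex.I)) :=
    Continuous.div (by fun_prop) (by fun_prop) hm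
  have hc2 : Continuous fun x : ℝ => 2 * z * Complex.exp (x + θ * Complex.I) /
      (z ^ 2 - Complex.exp (x + θ * Complex.I) ^ 2) :=
    Continuous.div (by fun_prop) (by fun_prop) hDθ
  have hsplit : ∀ X : ℝ, ∫ x in -X..X, F (x + θ * Complex.I) =
      (∫ x in -X..X, G (x + θ * Complex.I) / (z - Complex.exp (x + θ * Complex.I))) -
      (g ℓ / z : ℝ) * ∫ x in -X..X, 2 * z * Complex.exp (x + θ * Complex.I) /
      (z ^ 2 - Complex.exp (x + θ * Complex.I) ^ 2) := fun X => by
    rw [← intervalIntegral.integral_const_mul, ← intervalIntegral.integral_sub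
      (hc1.intervalIntegrable _ _) ((hc2.intervalIntegrable _ _).const_mul _)]
    congr 1
    ext x
    rw [hFeq _ (hwne x)]
    simp only [N, D]
    rw [sq_sub_sq]
    have h1 := hm x
    have h2 := hp x
    push_cast
    field_simp
  have hint : Integrable fun x : ℝ =>
      G (x + θ * Complex.I) / (z - Complex.exp (x + θ * Complex.I)) := by
    refine ((integrable_kernel hα0 hs hcosα).norm.mul_const z⁻¹).mono' hc1.aestronglyMeasurable
      (ae_of_all _ fun x => ?_)
    rw [norm_div, div_eq_mul_inv]
    refine mul_le_mul_of_nonneg_left (inv_anti₀ hz ?_) (norm_nonneg _)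
    refine le_trans ?_ (Complex.re_le_norm _)
    simp only [Complex.sub_re, Complex.ofReal_re]
    linarith [hζim x]
  have hL := intervalIntegral_tendsto_integral hint tendsto_neg_atTop_atBot tendsto_id
  have hlog := (tendsto_log_quot hz hθ0 hθ').const_mul ((g ℓ / z : ℝ) : ℂ)
  have h3 := (Complex.continuous_im.tendsto _).comp (hstrip.add (hL.sub hlog))
  have h4 : Tendsto (fun _ : ℝ => (0 : ℝ)) atTop (𝓝 (0 + ((∫ x : ℝ, G (x + θ * Complex.I) /
      (z - Complex.exp (x + θ * Complex.I))) - (g ℓ / z : ℝ) * (Real.pi * Complex.I))).im) := by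
    refine h3.congr fun X => ?_
    simp only [Function.comp, id]
    rw [hsplit X, sub_add_cancel, hreal X]
  -- `h4` is a statement about a constant function, so its limit must be `0`
  have h5 := tendsto_nhds_unique h4 tendsto_const_nhds
  rw [zero_add, Complex.sub_im, Complex.im_ofReal_mul, Complex.im_ofReal_mul, Complex.I_im,
    mul_one, sub_eq_zero] at h5
  simp only [G] at h5
  rw [h5]
  simp only [g]
  rw [Real.rpow_sub_one hz.ne', Real.rpow_def_of_pos hz, ← hℓ, mul_comm ℓ α, sub_eq_add_neg,
    Real.exp_add]
  ring_nf

end Aux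

/-- Laplace transform in `t` of the density of `T_{2α}(t)`:
`∫_0^∞ e^{−zt} t^{−α} W_{−α,1−α}(−s t^{−α}) dt = z^{α−1} e^{−s z^α}`. -/
theorem laplace_time_density_T2alpha (α s z : ℝ) (hα0 : 0 < α) (hα1 : α < 1)
    (hs : 0 < s) (hz : 0 < z) :
    ∫ t in Set.Ioi (0 : ℝ),
        Real.exp (-z * t) * (t ^ (-α) * wrightW α (-s * t ^ (-α)))
      = z ^ (α - 1) * Real.exp (-s * z ^ α) := by
  have hπ := Real.pi_pos
  -- `θ > π / 2` makes `Re e ^ w < 0`, and `α θ < π / 2` makes `Re e ^ (α w) > 0`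
  obtain ⟨θ, hθ, hθ'⟩ : ∃ θ, Real.pi / 2 < θ ∧ θ < min Real.pi (Real.pi / 2 / α) :=
    exists_between (lt_min (by linarith) (by
      rw [lt_div_iff₀ hα0]
      nlinarith))
  rw [lt_min_iff, lt_div_iff₀ hα0] at hθ'
  have hαθ : α * θ < Real.pi / 2 := by linarith
  have hc : 0 < Real.cos (α * θ) := Real.cos_pos_of_mem_Ioo
    ⟨by linarith [mul_pos hα0 (show 0 < θ by linarith)], hαθ⟩
  rw [laplace_eq hα0 hα1 hs hz hθ hθ'.1 hc, residue_integral hα0 hα1 hs hz hθ hθ'.1 hαθ,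
    mul_div_cancel_left₀ _ hπ.ne']
end
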